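/- arXiv:2206.12631 — 3 statements merged into one kernel-verified Lean document; each statement's English description precedes it below -/
import Mathlib

section
/- Let 𝒫 be a simple, branching, atomic quasinuclear type system. Then there exists a nonempty, nowhere dense, perfect subset K of 𝔠 such that Stab_V(𝒫) equals the setwise stabilizer Stab_V(K) = {g ∈ V : Kg = K}; furthermore, the action of Stab_V(K) on K is minimal (every orbit is dense in K). -/
/-!
Let `R` be the class forming the nucleus and let `K` be the set `avoid R` of infinite words with
no prefix in `R`. As `R` is child-closed, a word that enters `R` stays there; as `R` is a single
type and the relation is reduced, an address with both children in `R` is itself in `R`. Hence a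
cone `α𝔠` meets `K` exactly when `α ∉ R` (`exists_mem_avoid_iff`). This makes `K` nonempty and
closed. Every address has a descendant in `R`, so `K` is nowhere dense. Every address outside `R`
has a descendant in `𝒬†`, whose two children have disjoint cones meeting `K`, so `K` is perfect.

An element `g` stabilizing the relation preserves membership in `R` of long addresses, because
addresses in `R` are equivalent to all their descendants, whereas an address in `Q` is not
equivalent to its descendants in `R`; so `g` preserves `K`. Conversely, an element preserving `K`
preserves membership in `R`, and in a simple type system `R` recovers the whole relation:
`α ∼ β` if and only if `αγ ∈ R ↔ βγ ∈ R` for all `γ` (`rel_iff_of_simple`).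

For minimality, let `x ∈ K` lie outside a cone `η𝔠` meeting `K` with `η` long. A prefix `α` of `x`
with the length of `η` lies in `Q`, as does `η`, so strong connectivity gives `γ` with `ηγ ∼ α`.
The element of `V` interchanging the cones of `α` and `ηγ` (`exists_coneSwap`) preserves `K` and moves
`x` into `η𝔠`.
-/

/-- Addresses: finite words over the alphabet `{0,1}` (`Bool`). -/
abbrev Addr : Type := List Bool

/-- Cantor space: infinite words over the alphabet `{0,1}`. -/
abbrev Cantor : Type := ℕ → Bool

/-- Prepend the finite word `α` to the infinite word `w`. -/
def wcat (α : Addr) (w : Cantor) : Cantor := fun n =>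
  if h : n < α.length then α.get ⟨n, h⟩ else w (n - α.length)

/-- The cone of the address `α`: the set of infinite words having `α` as a prefix. -/
def cone (α : Addr) : Set Cantor := Set.range (wcat α)

/-- `g` is a prefix substitution map: there are partitions of Cantor space into cones
`(A i)𝔠` and `(B i)𝔠` such that `g` maps `(A i) w` to `(B i) w`. -/
def IsPrefixSubst (g : Equiv.Perm Cantor) : Prop :=
  ∃ (n : ℕ) (A B : Fin n → Addr),
    (∀ i j, i ≠ j → Disjoint (cone (A i)) (cone (A j))) ∧
    (⋃ i, cone (A i)) = Set.univ ∧
    (∀ i j, i ≠ j → Disjoint (cone (B i)) (cone (B j))) ∧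
    (⋃ i, cone (B i)) = Set.univ ∧
    (∀ i w, g (wcat (A i) w) = wcat (B i) w)

/-- Thompson's group `V`, as the set of prefix substitution maps inside `Equiv.Perm Cantor`. -/
def VSet : Set (Equiv.Perm Cantor) := { g | IsPrefixSubst g }

/-- `α ^ g = β` : `g` maps the cone of `α` onto the cone of `β` by the prefix
substitution `α ↦ β`. -/
def actsOn (g : Equiv.Perm Cantor) (α β : Addr) : Prop :=
  ∀ w, g (wcat α w) = wcat β w

/-- A subset of `Equiv.Perm Cantor` that is closed under the group operations. -/
def IsSubgroupSet (M : Set (Equiv.Perm Cantor)) : Prop :=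
  (1 : Equiv.Perm Cantor) ∈ M ∧ (∀ g ∈ M, ∀ h ∈ M, g * h ∈ M) ∧ ∀ g ∈ M, g⁻¹ ∈ M

/-- `M` is a maximal subgroup of Thompson's group `V`. -/
def IsMaximalSubgroupOfV (M : Set (Equiv.Perm Cantor)) : Prop :=
  IsSubgroupSet M ∧ M ⊆ VSet ∧ M ≠ VSet ∧
    ∀ H : Set (Equiv.Perm Cantor),
      IsSubgroupSet H → M ⊆ H → H ⊆ VSet → H = M ∨ H = VSet

/-- A relation on addresses is coherent if `α ∼ β` implies `α0 ∼ β0` and `α1 ∼ β1`. -/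
def Coherent (r : Addr → Addr → Prop) : Prop :=
  ∀ α β, r α β → r (α ++ [false]) (β ++ [false]) ∧ r (α ++ [true]) (β ++ [true])

/-- A relation on addresses is reduced if `α0 ∼ β0` and `α1 ∼ β1` imply `α ∼ β`. -/
def Reduced (r : Addr → Addr → Prop) : Prop :=
  ∀ α β, r (α ++ [false]) (β ++ [false]) → r (α ++ [true]) (β ++ [true]) → r α β

/-- A type system: a coherent and reduced equivalence relation on addresses
(identified with the partition of `Ω` into its classes). -/
def IsTypeSystem (r : Addr → Addr → Prop) : Prop :=
  Equivalence r ∧ Coherent r ∧ Reduced r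

/-- `g` fixes the parts of `r`: for all but finitely many addresses `α`, the image
`α ^ g` is defined and equivalent to `α`. -/
def FixesParts (r : Addr → Addr → Prop) (g : Equiv.Perm Cantor) : Prop :=
  { α : Addr | ¬ ∃ β, actsOn g α β ∧ r α β }.Finite

/-- `g` stabilizes `r`: on some cofinite set of addresses, `α ^ g` is defined and `g`
preserves equivalence and inequivalence of addresses. -/
def Stabilizes (r : Addr → Addr → Prop) (g : Equiv.Perm Cantor) : Prop :=
  ∃ Ω₀ : Set Addr, Ω₀ᶜ.Finite ∧ (∀ α ∈ Ω₀, ∃ β, actsOn g α β) ∧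
    ∀ α ∈ Ω₀, ∀ α' ∈ Ω₀, ∀ β β', actsOn g α β → actsOn g α' β' → (r α α' ↔ r β β')

/-- `Fix_V(𝒫)`: the elements of Thompson's group `V` fixing the parts of `r`. -/
def FixSet (r : Addr → Addr → Prop) : Set (Equiv.Perm Cantor) :=
  { g | IsPrefixSubst g ∧ FixesParts r g }

/-- `Stab_V(𝒫)`: the elements of Thompson's group `V` stabilizing `r`. -/
def StabSet (r : Addr → Addr → Prop) : Set (Equiv.Perm Cantor) :=
  { g | IsPrefixSubst g ∧ Stabilizes r g }

/-- The type system of `s` is a quotient of that of `r`. -/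
def IsQuotientOf (s r : Addr → Addr → Prop) : Prop :=
  IsTypeSystem s ∧ ∀ α β, r α β → s α β

/-- A simple type system: the universal relation is a proper quotient, and every
quotient is either the type system itself or the universal one. -/
def SimpleTS (r : Addr → Addr → Prop) : Prop :=
  IsTypeSystem r ∧ (∃ α β : Addr, ¬ r α β) ∧
    ∀ s : Addr → Addr → Prop, IsQuotientOf s r →
      (∀ α β, s α β ↔ r α β) ∨ ∀ α β, s α β

/-- The type (equivalence class) of the address `α`. -/
def typeOf (r : Addr → Addr → Prop) (α : Addr) : Set Addr := { β | r α β }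

/-- `S` is a union of `r`-classes, i.e. a set of types of the type system. -/
def Saturated (r : Addr → Addr → Prop) (S : Set Addr) : Prop :=
  ∀ α ∈ S, ∀ β, r α β → β ∈ S

/-- `S` is child-closed: with each address (type) it contains both of its children. -/
def ChildClosed (S : Set Addr) : Prop :=
  ∀ α ∈ S, α ++ [false] ∈ S ∧ α ++ [true] ∈ S

/-- The word `γ` determines a path through `S` from (the type of) `α`. -/
def PathThrough (S : Set Addr) (α γ : Addr) : Prop :=
  ∀ ζ : Addr, ζ <+: γ → α ++ ζ ∈ S

/-- `S` is strongly connected. -/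
def StronglyConnected (r : Addr → Addr → Prop) (S : Set Addr) : Prop :=
  ∀ α ∈ S, ∀ β ∈ S, ∃ γ : Addr, γ ≠ [] ∧ PathThrough S α γ ∧ r (α ++ γ) β

/-- A nucleus: a (nonempty) child-closed and strongly connected set of types. -/
def IsNucleus (r : Addr → Addr → Prop) (S : Set Addr) : Prop :=
  S.Nonempty ∧ Saturated r S ∧ ChildClosed S ∧ StronglyConnected r S

/-- `S` consists of exactly one type. -/
def IsSingleType (r : Addr → Addr → Prop) (S : Set Addr) : Prop :=
  ∃ α : Addr, S = typeOf r α

/-- A multinuclear type system: finitely many pairwise disjoint nuclei containing the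
types of all sufficiently long addresses. -/
def Multinuclear (r : Addr → Addr → Prop) : Prop :=
  ∃ (k : ℕ) (Q : Fin k → Set Addr), 0 < k ∧ (∀ i, IsNucleus r (Q i)) ∧
    (∀ i j, i ≠ j → Disjoint (Q i) (Q j)) ∧
    ∃ t : ℕ, 0 < t ∧ ∀ α : Addr, t ≤ α.length → ∃ i, α ∈ Q i

/-- A nuclear type system: a single nucleus containing the types of all sufficiently
long addresses. -/
def Nuclear (r : Addr → Addr → Prop) : Prop :=
  ∃ Q : Set Addr, IsNucleus r Q ∧ ∃ t : ℕ, 0 < t ∧ ∀ α : Addr, t ≤ α.length → α ∈ Q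

/-- An atomic binuclear type system: two disjoint singleton nuclei containing the types
of all sufficiently long addresses. -/
def AtomicBinuclear (r : Addr → Addr → Prop) : Prop :=
  ∃ Q₁ Q₂ : Set Addr, IsNucleus r Q₁ ∧ IsNucleus r Q₂ ∧ Disjoint Q₁ Q₂ ∧
    IsSingleType r Q₁ ∧ IsSingleType r Q₂ ∧
    ∃ t : ℕ, 0 < t ∧ ∀ α : Addr, t ≤ α.length → α ∈ Q₁ ∪ Q₂

/-- The data `(𝒬, ℛ)` witnessing that a type system is quasinuclear. -/
def QuasinuclearData (r : Addr → Addr → Prop) (Q R : Set Addr) : Prop :=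
  Q.Nonempty ∧ R.Nonempty ∧ Saturated r Q ∧ Saturated r R ∧ Disjoint Q R ∧
    (∃ t : ℕ, 0 < t ∧ ∀ α : Addr, t ≤ α.length → α ∈ Q ∪ R) ∧
    IsNucleus r R ∧ StronglyConnected r Q ∧ ChildClosed (Q ∪ R) ∧
    ∀ α ∈ Q, ∀ β ∈ R, ∃ γ : Addr, r (α ++ γ) β

/-- A quasinuclear type system. -/
def Quasinuclear (r : Addr → Addr → Prop) : Prop :=
  ∃ Q R : Set Addr, QuasinuclearData r Q R

/-- `𝒬†`: the types of `𝒬` both of whose children lie in `𝒬`. -/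
def QDagger (Q : Set Addr) : Set Addr :=
  { α ∈ Q | α ++ [false] ∈ Q ∧ α ++ [true] ∈ Q }

/-- An atomic quasinuclear type system: the nucleus `ℛ` is a single type. -/
def AtomicQuasinuclear (r : Addr → Addr → Prop) : Prop :=
  ∃ Q R : Set Addr, QuasinuclearData r Q R ∧ IsSingleType r R

/-- `u` and `v` lie in the same tail class. -/
def TailEq (u v : Cantor) : Prop :=
  ∃ (α β : Addr) (w : Cantor), u = wcat α w ∧ v = wcat β w

/-- A point of Cantor space is rational if it is eventually periodic. -/
def EventuallyPeriodic (u : Cantor) : Prop :=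
  ∃ k p : ℕ, 0 < p ∧ ∀ n : ℕ, k ≤ n → u (n + p) = u n

/-- The setwise stabilizer in Thompson's group `V` of a subset `D` of Cantor space. -/
def setStab (D : Set Cantor) : Set (Equiv.Perm Cantor) :=
  { g | IsPrefixSubst g ∧ (fun w => g w) '' D = D }

/-! ### Words, prefixes and cones -/

/-- The prefix of length `n` of the infinite word `x`. -/
def pre (x : Cantor) (n : ℕ) : Addr := List.ofFn (fun i : Fin n => x i)

@[simp] theorem length_pre (x : Cantor) (n : ℕ) : (pre x n).length = n := by simp [pre]

theorem pre_succ (x : Cantor) (n : ℕ) : pre x (n + 1) = pre x n ++ [x n] := by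
  rw [pre, List.ofFn_succ_last]; rfl

theorem wcat_nil (w : Cantor) : wcat [] w = w := by
  funext n; simp [wcat]

theorem wcat_append (α β : Addr) (w : Cantor) : wcat (α ++ β) w = wcat α (wcat β w) := by
  funext n
  simp only [wcat, List.length_append, List.get_eq_getElem]
  by_cases h1 : n < α.length
  · have h2 : n < α.length + β.length := by omega
    simp [h1, h2, List.getElem_append_left]
  · by_cases h2 : n < α.length + β.length
    · have h3 : n - α.length < β.length := by omega
      simp only [h1, h2, h3, dite_true, dite_false]
      rw [List.getElem_append_right (by omega)]
    · have h3 : ¬ n - α.length < β.length := by omega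
      simp only [h1, h2, h3, dite_false]
      congr 1; omega

theorem wcat_pre (x : Cantor) (n : ℕ) : wcat (pre x n) (fun k => x (n + k)) = x := by
  funext k
  by_cases h : k < n
  · simp [wcat, pre, h]
  · simp only [wcat, length_pre, h, dite_false]
    congr 1; omega

/-- Every infinite word splits as a prefix of given length followed by a tail. -/
theorem exists_split (x : Cantor) (n : ℕ) : ∃ α w, α.length = n ∧ x = wcat α w :=
  ⟨pre x n, _, by simp, (wcat_pre x n).symm⟩

theorem wcat_inj_of_length {α β : Addr} {w u : Cantor} (h : wcat α w = wcat β u)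
    (hl : α.length = β.length) : α = β ∧ w = u := by
  constructor
  · apply List.ext_getElem hl
    intro n h1 h2
    have := congrFun h n
    simpa [wcat, h1, h2] using this
  · funext n
    have := congrFun h (α.length + n)
    simpa [wcat, hl] using this

theorem wcat_inj {α : Addr} {w u : Cantor} (h : wcat α w = wcat α u) : w = u :=
  (wcat_inj_of_length h rfl).2

/-- Two finite prefixes of one infinite word are comparable. -/
theorem wcat_prefix {α β : Addr} {w u : Cantor} (h : wcat α w = wcat β u)
    (hl : β.length ≤ α.length) : ∃ δ, α = β ++ δ ∧ u = wcat δ w := by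
  have h0 : wcat (α.take β.length ++ α.drop β.length) w = wcat β u := by
    rwa [List.take_append_drop]
  rw [wcat_append] at h0
  obtain ⟨h1, h2⟩ := wcat_inj_of_length h0 (by simp [hl])
  refine ⟨α.drop β.length, ?_, h2.symm⟩
  conv_lhs => rw [← List.take_append_drop β.length α, h1]

theorem cone_eq_cylinder (α : Addr) (w : Cantor) :
    cone α = PiNat.cylinder (E := fun _ => Bool) (wcat α w) α.length := by
  ext x
  rw [PiNat.mem_cylinder_iff]
  constructor
  · rintro ⟨u, rfl⟩ i hi
    simp [wcat, hi]
  · intro h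
    refine ⟨fun k => x (α.length + k), ?_⟩
    funext k
    by_cases hk : k < α.length
    · rw [h k hk]; simp [wcat, hk]
    · simp only [wcat, hk, dite_false]
      congr 1; omega

theorem isOpen_cone (α : Addr) : IsOpen (cone α) := by
  rw [cone_eq_cylinder α (fun _ => false)]
  exact PiNat.isOpen_cylinder _ _ _

/-- The cones of the prefixes of `x` form a neighbourhood basis at `x`. -/
theorem exists_cone_subset {x : Cantor} {U : Set Cantor} (hU : U ∈ nhds x) (N : ℕ) :
    ∃ α w, N ≤ α.length ∧ x = wcat α w ∧ cone α ⊆ U := by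
  obtain ⟨V, hVU, hV, hxV⟩ := mem_nhds_iff.1 hU
  obtain ⟨_, ⟨y, n, rfl⟩, hx, hs⟩ :=
    (PiNat.isTopologicalBasis_cylinders (fun _ => Bool)).exists_subset_of_mem_open hxV hV
  obtain ⟨α, w, hl, rfl⟩ := exists_split x (max n N)
  refine ⟨α, w, by omega, rfl, ?_⟩
  rw [cone_eq_cylinder α w]
  refine subset_trans (PiNat.cylinder_anti _ (by omega : n ≤ α.length)) ?_
  rw [PiNat.mem_cylinder_iff_eq.1 hx]
  exact hs.trans hVU

/-! ### Prefix substitutions -/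

theorem actsOn_append {g : Equiv.Perm Cantor} {α β : Addr} (h : actsOn g α β) (γ : Addr) :
    actsOn g (α ++ γ) (β ++ γ) := by
  intro w
  rw [wcat_append, wcat_append, h]

theorem exists_actsOn {g : Equiv.Perm Cantor} (hg : IsPrefixSubst g) :
    ∃ N : ℕ, ∀ α : Addr, N ≤ α.length → ∃ β, actsOn g α β := by
  obtain ⟨n, A, B, -, hA, -, -, h⟩ := hg
  refine ⟨Finset.univ.sup fun i => (A i).length, fun α hα => ?_⟩
  have hx : wcat α (fun _ => false) ∈ ⋃ i, cone (A i) := by rw [hA]; trivial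
  obtain ⟨i, u, hu⟩ := Set.mem_iUnion.1 hx
  obtain ⟨δ, rfl, -⟩ := wcat_prefix hu.symm
    ((Finset.le_sup (f := fun i => (A i).length) (Finset.mem_univ i)).trans hα)
  exact ⟨B i ++ δ, actsOn_append (h i) δ⟩

/-- A permutation acting by prefix substitution on every cone at some level belongs to `V`:
bijectivity makes the image cones a partition. -/
theorem isPrefixSubst_of_level {g : Equiv.Perm Cantor} (N : ℕ)
    (h : ∀ α : Addr, α.length = N → ∃ β, actsOn g α β) : IsPrefixSubst g := by
  classical
  have : Finite {α : Addr // α.length = N} := List.finite_length_eq Bool N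
  obtain ⟨n, ⟨e⟩⟩ := Finite.exists_equiv_fin {α : Addr // α.length = N}
  choose B hB using fun i : Fin n => h (e.symm i).1 (e.symm i).2
  have hdis : ∀ i j, i ≠ j → Disjoint (cone (e.symm i).1) (cone (e.symm j).1) := by
    intro i j hij
    rw [Set.disjoint_left]
    rintro _ ⟨w, rfl⟩ ⟨u, hu⟩
    have := (wcat_inj_of_length hu ((e.symm j).2.trans (e.symm i).2.symm)).1
    exact hij (e.symm.injective (Subtype.ext this.symm))
  have hcov : ∀ x, ∃ i, x ∈ cone (e.symm i).1 := by
    intro x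
    obtain ⟨α, w, hl, rfl⟩ := exists_split x N
    exact ⟨e ⟨α, hl⟩, w, by simp⟩
  have himg : ∀ i, cone (B i) = g '' cone (e.symm i).1 := by
    intro i
    unfold cone
    rw [← Set.range_comp]
    congr 1
    funext w
    exact (hB i w).symm
  refine ⟨n, fun i => (e.symm i).1, B, hdis, ?_, ?_, ?_, hB⟩
  · exact Set.eq_univ_of_forall fun x => Set.mem_iUnion.2 (hcov x)
  · intro i j hij
    rw [himg, himg]
    exact (Set.disjoint_image_iff g.injective).2 (hdis i j hij)
  · refine Set.eq_univ_of_forall fun y => Set.mem_iUnion.2 ?_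
    obtain ⟨i, hi⟩ := hcov (g.symm y)
    exact ⟨i, by rw [himg]; exact ⟨_, hi, by simp⟩⟩

/-- For addresses with disjoint cones there is an element of `V` interchanging the two cones
and fixing every other point. -/
theorem exists_coneSwap {α β : Addr} (hd : Disjoint (cone α) (cone β)) :
    ∃ g : Equiv.Perm Cantor, IsPrefixSubst g ∧ actsOn g α β ∧ actsOn g β α ∧
      ∀ x, x ∉ cone α → x ∉ cone β → g x = x := by
  classical
  let f : Cantor → Cantor := fun x =>
    if x ∈ cone α then wcat β (fun k => x (α.length + k))
    else if x ∈ cone β then wcat α (fun k => x (β.length + k)) else x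
  have htail : ∀ (γ : Addr) (w : Cantor), (fun k => wcat γ w (γ.length + k)) = w := by
    intro γ w; funext k; simp [wcat]
  have hα : ∀ w, f (wcat α w) = wcat β w := by
    intro w
    have h1 : wcat α w ∈ cone α := ⟨w, rfl⟩
    simp only [f, h1, if_true, htail]
  have hβ : ∀ w, f (wcat β w) = wcat α w := by
    intro w
    have h1 : wcat β w ∈ cone β := ⟨w, rfl⟩
    have h2 : wcat β w ∉ cone α := fun h => Set.disjoint_left.1 hd h h1
    simp only [f, h1, h2, if_true, if_false, htail]
  have ho : ∀ x, x ∉ cone α → x ∉ cone β → f x = x := by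
    intro x h1 h2
    simp only [f, h1, h2, if_false]
  have hinv : Function.Involutive f := by
    intro x
    by_cases h1 : x ∈ cone α
    · obtain ⟨w, rfl⟩ := h1
      rw [hα, hβ]
    · by_cases h2 : x ∈ cone β
      · obtain ⟨w, rfl⟩ := h2
        rw [hβ, hα]
      · rw [ho x h1 h2, ho x h1 h2]
  refine ⟨hinv.toPerm, ?_, hα, hβ, ho⟩
  have hα' : actsOn hinv.toPerm α β := hα
  have hβ' : actsOn hinv.toPerm β α := hβ
  refine isPrefixSubst_of_level (max α.length β.length) fun γ hγ => ?_
  by_cases h1 : ∃ δ, γ = α ++ δ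
  · obtain ⟨δ, rfl⟩ := h1
    exact ⟨_, actsOn_append hα' δ⟩
  by_cases h2 : ∃ δ, γ = β ++ δ
  · obtain ⟨δ, rfl⟩ := h2
    exact ⟨_, actsOn_append hβ' δ⟩
  refine ⟨γ, fun w => ho _ ?_ ?_⟩
  · rintro ⟨u, hu⟩
    obtain ⟨δ, hδ, -⟩ := wcat_prefix hu.symm (by omega)
    exact h1 ⟨δ, hδ⟩
  · rintro ⟨u, hu⟩
    obtain ⟨δ, hδ, -⟩ := wcat_prefix hu.symm (by omega)
    exact h2 ⟨δ, hδ⟩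

/-! ### The set of words avoiding the nucleus -/

/-- The infinite words none of whose finite prefixes lies in `R`. -/
def avoid (R : Set Addr) : Set Cantor := { x | ∀ α w, x = wcat α w → α ∉ R }

theorem isClosed_avoid (R : Set Addr) : IsClosed (avoid R) := by
  have : (avoid R)ᶜ = ⋃ α ∈ R, cone α := by
    ext x
    simp only [avoid, Set.mem_compl_iff, Set.mem_ofPred_eq, Set.mem_iUnion, cone, Set.mem_range]
    push Not
    constructor
    · rintro ⟨α, w, rfl, h⟩
      exact ⟨α, h, w, rfl⟩
    · rintro ⟨α, h, w, rfl⟩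
      exact ⟨α, w, rfl, h⟩
  rw [← isOpen_compl_iff, this]
  exact isOpen_biUnion fun α _ => isOpen_cone α

theorem append_mem {R : Set Addr} (hR : ChildClosed R) {α : Addr} (h : α ∈ R) (γ : Addr) :
    α ++ γ ∈ R := by
  induction γ using List.reverseRecOn with
  | nil => simpa using h
  | append_singleton γ b ih =>
    rw [← List.append_assoc]
    cases b
    · exact (hR _ ih).1
    · exact (hR _ ih).2

/-- Membership in `avoid R` is decided by the prefixes beyond any given one. -/
theorem wcat_mem_avoid {R : Set Addr} (hR : ChildClosed R) (α : Addr) (w : Cantor) :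
    wcat α w ∈ avoid R ↔ ∀ n, α ++ pre w n ∉ R := by
  constructor
  · intro h n
    refine h (α ++ pre w n) (fun k => w (n + k)) ?_
    rw [wcat_append, wcat_pre]
  · intro h β u hu hβ
    apply h β.length
    have h1 : wcat (α ++ pre w β.length) (fun k => w (β.length + k)) = wcat β u := by
      rw [wcat_append, wcat_pre, hu]
    obtain ⟨δ, hδ, -⟩ := wcat_prefix h1 (by simp)
    rw [hδ]
    exact append_mem hR hβ δ

/-- An address outside `R` has a child outside `R`, so following such children forever gives
a point of `avoid R` in its cone. -/
theorem exists_mem_avoid {R : Set Addr} (hR : ChildClosed R)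
    (hred : ∀ α, α ++ [false] ∈ R → α ++ [true] ∈ R → α ∈ R) {α : Addr} (hα : α ∉ R) :
    ∃ w, wcat α w ∈ avoid R := by
  have hch : ∀ β : Addr, ∃ b : Bool, β ∉ R → β ++ [b] ∉ R := by
    intro β
    by_cases h0 : β ++ [false] ∈ R
    · exact ⟨true, fun hβ h1 => hβ (hred β h0 h1)⟩
    · exact ⟨false, fun _ => h0⟩
  choose f hf using hch
  let a : ℕ → Addr := fun n => Nat.rec α (fun _ β => β ++ [f β]) n
  have hs : ∀ n, a (n + 1) = a n ++ [f (a n)] := fun n => rfl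
  refine ⟨fun n => f (a n), (wcat_mem_avoid hR _ _).2 fun n => ?_⟩
  have key : a n = α ++ pre (fun n => f (a n)) n ∧ a n ∉ R := by
    induction n with
    | zero => exact ⟨by simp [a, pre], hα⟩
    | succ n ih =>
      refine ⟨?_, ?_⟩
      · rw [pre_succ, ← List.append_assoc, ← ih.1, hs]
      · rw [hs]; exact hf _ ih.2
  rw [← key.1]
  exact key.2

theorem exists_mem_avoid_iff {R : Set Addr} (hR : ChildClosed R)
    (hred : ∀ α, α ++ [false] ∈ R → α ++ [true] ∈ R → α ∈ R) (α : Addr) :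
    (∃ w, wcat α w ∈ avoid R) ↔ α ∉ R :=
  ⟨fun ⟨w, hw⟩ => hw α w rfl, exists_mem_avoid hR hred⟩

theorem image_eq_iff (g : Equiv.Perm Cantor) (K : Set Cantor) :
    (fun w => g w) '' K = K ↔ ∀ x, x ∈ K ↔ g x ∈ K := by
  constructor
  · intro h x
    constructor
    · intro hx
      rw [← h]
      exact ⟨x, hx, rfl⟩
    · intro hx
      rw [← h] at hx
      obtain ⟨y, hy, hxy⟩ := hx
      rwa [← g.injective hxy]
  · intro h
    ext y
    constructor
    · rintro ⟨x, hx, rfl⟩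
      exact (h x).1 hx
    · intro hy
      exact ⟨g.symm y, (h _).2 (by simpa using hy), by simp⟩

/-! ### Type systems -/

theorem rel_append {r : Addr → Addr → Prop} (hc : Coherent r) {α β : Addr} (h : r α β)
    (γ : Addr) : r (α ++ γ) (β ++ γ) := by
  induction γ using List.reverseRecOn with
  | nil => simpa using h
  | append_singleton γ b ih =>
    rw [← List.append_assoc, ← List.append_assoc]
    cases b
    · exact (hc _ _ ih).1
    · exact (hc _ _ ih).2

/-- In a simple type system a proper saturated child-closed reduced set `R` determines the
relation: addresses are equivalent exactly when the same descendants of them lie in `R`.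
The right-hand side defines a quotient, and it is not universal. -/
theorem rel_iff_of_simple {r : Addr → Addr → Prop} (hr : SimpleTS r) {R : Set Addr}
    (hsat : Saturated r R) (hR : ChildClosed R)
    (hred : ∀ α, α ++ [false] ∈ R → α ++ [true] ∈ R → α ∈ R)
    (hne : ∃ ρ, ρ ∈ R) (hnot : ∃ θ, θ ∉ R) (α β : Addr) :
    r α β ↔ ∀ γ, α ++ γ ∈ R ↔ β ++ γ ∈ R := by
  obtain ⟨⟨heq, hc, -⟩, -, hs⟩ := hr
  have hquot : IsQuotientOf (fun α β => ∀ γ, α ++ γ ∈ R ↔ β ++ γ ∈ R) r := by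
    refine ⟨⟨⟨fun _ _ => Iff.rfl, fun h γ => (h γ).symm, fun h h' γ => (h γ).trans (h' γ)⟩,
      ?_, ?_⟩, ?_⟩
    · intro α β h
      constructor
      · intro γ; simpa using h (false :: γ)
      · intro γ; simpa using h (true :: γ)
    · intro α β h0 h1 γ
      match γ with
      | [] =>
        have e0 := h0 []
        have e1 := h1 []
        simp only [List.append_nil] at e0 e1 ⊢
        exact ⟨fun h => hred β (e0.1 (hR α h).1) (e1.1 (hR α h).2),
          fun h => hred α (e0.2 (hR β h).1) (e1.2 (hR β h).2)⟩
      | false :: γ => simpa using h0 γ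
      | true :: γ => simpa using h1 γ
    · intro α β h γ
      exact ⟨fun h' => hsat _ h' _ (rel_append hc h γ),
        fun h' => hsat _ h' _ (heq.symm (rel_append hc h γ))⟩
  rcases hs _ hquot with h | h
  · exact (h α β).symm
  · obtain ⟨ρ, hρ⟩ := hne
    obtain ⟨θ, hθ⟩ := hnot
    have := h ρ θ []
    simp only [List.append_nil] at this
    exact absurd (this.1 hρ) hθ

/-! ### The stabilizer -/

/-- **Statement 15.**  The stabilizer of a simple, branching, atomic quasinuclear type
system is the setwise stabilizer of a nonempty, nowhere dense, perfect subset `K` of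
Cantor space, and the action of this stabilizer on `K` is minimal. -/
theorem stabSet_of_branching_atomicQuasinuclear
    (r : Addr → Addr → Prop) (hr : SimpleTS r)
    (h : ∃ Q R : Set Addr, QuasinuclearData r Q R ∧ IsSingleType r R ∧
      (QDagger Q).Nonempty) :
    ∃ K : Set Cantor, K.Nonempty ∧ IsNowhereDense K ∧ Perfect K ∧
      StabSet r = setStab K ∧
      ∀ x ∈ K, K ⊆ closure { y : Cantor | ∃ g ∈ setStab K, y = g x } := by
  obtain ⟨Q, R, ⟨hQne, hRne, hQsat, hRsat, hdis, ⟨t, -, ht⟩, ⟨-, -, hR, -⟩, hQsc, -, hQR⟩,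
    ⟨ρ₀, rfl⟩, θ, hθ, hθ0, hθ1⟩ := h
  have heq : Equivalence r := hr.1.1
  have hc : Coherent r := hr.1.2.1
  obtain ⟨ρ, hρ⟩ := hRne
  set R := typeOf r ρ₀ with hRdef
  have hone : ∀ α ∈ R, ∀ β ∈ R, r α β := fun α hα β hβ => heq.trans (heq.symm hα) hβ
  have hred : ∀ α, α ++ [false] ∈ R → α ++ [true] ∈ R → α ∈ R := fun α h0 h1 =>
    hRsat ρ hρ α (hr.1.2.2 _ _ (hone _ (hR ρ hρ).1 _ h0) (hone _ (hR ρ hρ).2 _ h1))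
  have hQnR : ∀ α ∈ Q, α ∉ R := fun α hα hα' => Set.disjoint_left.1 hdis hα hα'
  have hpt := fun α => exists_mem_avoid_iff hR hred α
  have hrel := rel_iff_of_simple hr hRsat hR hred ⟨ρ, hρ⟩ ⟨θ, hQnR θ hθ⟩
  have hroot : ([] : Addr) ∉ R := fun h => hQnR θ hθ (by simpa using append_mem hR h θ)
  have hexQ : ∀ α, α ∉ R → ∃ γ, γ.length = t ∧ α ++ γ ∈ Q := by
    intro α hα
    obtain ⟨w, hw⟩ := (hpt α).2 hα
    refine ⟨pre w t, by simp, ?_⟩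
    rcases ht (α ++ pre w t) (by simp) with h | h
    · exact h
    · exact absurd h ((wcat_mem_avoid hR α w).1 hw t)
  have hexR : ∀ α, ∃ γ, α ++ γ ∈ R := by
    intro α
    by_cases hα : α ∈ R
    · exact ⟨[], by simpa using hα⟩
    · obtain ⟨γ, -, hγ⟩ := hexQ α hα
      obtain ⟨δ, hδ⟩ := hQR _ hγ ρ hρ
      exact ⟨γ ++ δ, by rw [← List.append_assoc]; exact hRsat ρ hρ _ (heq.symm hδ)⟩
  refine ⟨avoid R, ?_, ?_, ⟨isClosed_avoid R, ?_⟩, ?_, ?_⟩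
  · obtain ⟨w, hw⟩ := (hpt []).2 hroot
    exact ⟨_, hw⟩
  · rw [IsNowhereDense, (isClosed_avoid R).closure_eq, Set.eq_empty_iff_forall_notMem]
    intro x hx
    obtain ⟨α, w, -, rfl, hα⟩ := exists_cone_subset (mem_interior_iff_mem_nhds.1 hx) 0
    obtain ⟨γ, hγ⟩ := hexR α
    refine hα ⟨wcat γ w, rfl⟩ (α ++ γ) w ?_ hγ
    rw [wcat_append]
  · intro x hx
    rw [accPt_iff_nhds]
    intro U hU
    obtain ⟨α, w, -, rfl, hα⟩ := exists_cone_subset hU 0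
    obtain ⟨γ, -, hγ⟩ := hexQ α (hx α w rfl)
    obtain ⟨δ, -, -, hδ⟩ := hQsc _ hγ θ hθ
    -- both children of `α ++ γ ++ δ` lie in `Q`, so each of their cones has a point of the set
    obtain ⟨h0, h1⟩ := hc _ _ (heq.symm hδ)
    obtain ⟨u, hu⟩ := (hpt _).2 (hQnR _ (hQsat _ hθ0 _ h0))
    obtain ⟨v, hv⟩ := (hpt _).2 (hQnR _ (hQsat _ hθ1 _ h1))
    have hne : wcat (α ++ γ ++ δ ++ [false]) u ≠ wcat (α ++ γ ++ δ ++ [true]) v := by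
      intro h
      simpa using (wcat_inj_of_length h (by simp)).1
    have hmem : ∀ (b : Bool) (z : Cantor), wcat (α ++ γ ++ δ ++ [b]) z ∈ U := by
      intro b z
      refine hα ⟨wcat (γ ++ (δ ++ [b])) z, ?_⟩
      rw [← wcat_append]
      simp
    by_cases hxu : wcat (α ++ γ ++ δ ++ [false]) u = wcat α w
    · exact ⟨_, ⟨hmem true v, hv⟩, fun h => hne (hxu.trans h.symm)⟩
    · exact ⟨_, ⟨hmem false u, hu⟩, hxu⟩
  · ext g
    constructor
    · rintro ⟨hg, Ω₀, hfin, hdef, hst⟩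
      refine ⟨hg, (image_eq_iff _ _).2 ?_⟩
      obtain ⟨N, hN⟩ := (hfin.image List.length).bddAbove
      have hΩ : ∀ α : Addr, N + 1 ≤ α.length → α ∈ Ω₀ := by
        intro α hα
        by_contra hcon
        have : α.length ≤ N := hN ⟨α, hcon, rfl⟩
        omega
      -- an address in `R` is equivalent to all its descendants, one in `Q` is not
      have htrans : ∀ α β : Addr,
          (∀ γ δ, r (α ++ γ) (α ++ δ) → r (β ++ γ) (β ++ δ)) → α ∈ R → β ∈ R := by
        intro α β h hα
        by_contra hβ
        obtain ⟨γ, -, hγ⟩ := hexQ β hβ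
        obtain ⟨δ, hδ⟩ := hQR _ hγ ρ hρ
        have h1 : β ++ γ ++ δ ∈ R := hRsat ρ hρ _ (heq.symm hδ)
        have h2 := h γ (γ ++ δ) (hone _ (append_mem hR hα _) _ (append_mem hR hα _))
        rw [← List.append_assoc] at h2
        exact hQnR _ hγ (hRsat _ h1 _ (heq.symm h2))
      have hRiff : ∀ α β : Addr, N + 1 ≤ α.length → actsOn g α β → (α ∈ R ↔ β ∈ R) := by
        intro α β hl hact
        have h : ∀ γ δ, r (α ++ γ) (α ++ δ) ↔ r (β ++ γ) (β ++ δ) := fun γ δ =>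
          hst _ (hΩ _ (by simp; omega)) _ (hΩ _ (by simp; omega)) _ _
            (actsOn_append hact γ) (actsOn_append hact δ)
        exact ⟨htrans α β fun γ δ => (h γ δ).1, htrans β α fun γ δ => (h γ δ).2⟩
      intro x
      obtain ⟨α, w, hl, rfl⟩ := exists_split x (N + 1)
      obtain ⟨β, hβ⟩ := hdef α (hΩ α (by omega))
      rw [hβ, wcat_mem_avoid hR, wcat_mem_avoid hR]
      refine forall_congr' fun n => not_congr ?_
      exact hRiff _ _ (by simp; omega) (actsOn_append hβ _)
    · rintro ⟨hg, hK⟩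
      rw [image_eq_iff] at hK
      refine ⟨hg, ?_⟩
      obtain ⟨N, hN⟩ := exists_actsOn hg
      refine ⟨{α | N ≤ α.length}, ?_, fun α hα => hN α hα, ?_⟩
      · refine (List.finite_length_lt Bool N).subset fun α hα => ?_
        simpa using hα
      · intro α _ α' _ β β' hβ hβ'
        have hRiff : ∀ α β : Addr, actsOn g α β → (α ∈ R ↔ β ∈ R) := by
          intro α β hact
          rw [← not_iff_not, ← hpt α, ← hpt β]
          refine exists_congr fun w => ?_
          rw [hK, hact]
        rw [hrel, hrel]
        refine forall_congr' fun γ => ?_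
        rw [hRiff _ _ (actsOn_append hβ γ), hRiff _ _ (actsOn_append hβ' γ)]
  · intro x hx y hy
    rw [mem_closure_iff_nhds]
    intro U hU
    obtain ⟨η, u, hηt, rfl, hη⟩ := exists_cone_subset hU t
    have hηQ : η ∈ Q := (ht η hηt).resolve_right (hy η u rfl)
    by_cases hxη : x ∈ cone η
    · refine ⟨x, hη hxη, 1, ⟨?_, (image_eq_iff _ _).2 fun x => Iff.rfl⟩, rfl⟩
      exact isPrefixSubst_of_level 0 fun α _ => ⟨α, fun w => rfl⟩
    · obtain ⟨α, w, hl, rfl⟩ := exists_split x η.length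
      have hαQ : α ∈ Q := (ht α (by omega)).resolve_right (hx α w rfl)
      obtain ⟨γ, -, -, hγ⟩ := hQsc η hηQ α hαQ
      have hd : Disjoint (cone α) (cone (η ++ γ)) := by
        rw [Set.disjoint_left]
        rintro _ ⟨v, rfl⟩ ⟨v', hv'⟩
        rw [wcat_append] at hv'
        exact hxη ⟨w, by rw [(wcat_inj_of_length hv' hl.symm).1]⟩
      obtain ⟨g, hg, h1, h2, h3⟩ := exists_coneSwap hd
      have hmem : ∀ v, wcat α v ∈ avoid R ↔ wcat (η ++ γ) v ∈ avoid R := by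
        intro v
        rw [wcat_mem_avoid hR, wcat_mem_avoid hR]
        exact forall_congr' fun n => not_congr ((hrel _ _).1 (heq.symm hγ) _)
      refine ⟨g (wcat α w), ?_, g, ⟨hg, (image_eq_iff _ _).2 fun z => ?_⟩, rfl⟩
      · rw [h1, wcat_append]
        exact hη ⟨_, rfl⟩
      · by_cases hz : z ∈ cone α
        · obtain ⟨v, rfl⟩ := hz
          rw [h1]; exact hmem v
        · by_cases hz' : z ∈ cone (η ++ γ)
          · obtain ⟨v, rfl⟩ := hz'
            rw [h2]; exact (hmem v).symm
          · rw [h3 z hz hz']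
end

section
/- There are uncountably many distinct maximal subgroups of Thompson's group V that arise as stabilizers Stab_V(𝒫) of simple nuclear type systems 𝒫, and moreover none of these subgroups stabilizes setwise any nonempty finite subset of 𝔠. -/
/-! ### Words, cones and prefix substitutions -/

namespace TypeSystems

lemma wcat_nil (w : Cantor) : wcat [] w = w := by
  funext n; simp [wcat]

lemma wcat_cons_zero (b : Bool) (α : Addr) (w : Cantor) : wcat (b :: α) w 0 = b := by
  simp [wcat]

lemma wcat_cons_succ (b : Bool) (α : Addr) (w : Cantor) (n : ℕ) :
    wcat (b :: α) w (n + 1) = wcat α w n := by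
  simp [wcat]

lemma wcat_append (α β : Addr) (w : Cantor) : wcat (α ++ β) w = wcat α (wcat β w) := by
  induction α with
  | nil => simp [wcat_nil]
  | cons b α ih =>
    funext n
    cases n with
    | zero => simp [wcat_cons_zero]
    | succ n => simp [wcat_cons_succ, ih]

lemma wcat_cons_inj {a b : Bool} {α β : Addr} {w v : Cantor}
    (h : wcat (a :: α) w = wcat (b :: β) v) : a = b ∧ wcat α w = wcat β v := by
  constructor
  · simpa [wcat_cons_zero] using congrFun h 0
  · funext n
    simpa [wcat_cons_succ] using congrFun h (n + 1)

lemma wcat_inj {α : Addr} {w v : Cantor} (h : wcat α w = wcat α v) : w = v := by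
  induction α with
  | nil => simpa [wcat_nil] using h
  | cons b α ih => exact ih (wcat_cons_inj h).2

lemma wcat_prefix {α : Addr} : ∀ {β : Addr} {w v : Cantor}, wcat α w = wcat β v →
    α.length ≤ β.length → ∃ x, β = α ++ x := by
  induction α with
  | nil => intro β _ _ _ _; exact ⟨β, rfl⟩
  | cons a α ih =>
    intro β w v h hl
    cases β with
    | nil => simp at hl
    | cons b β =>
      obtain ⟨rfl, h2⟩ := wcat_cons_inj h
      obtain ⟨x, rfl⟩ := ih h2 (by simpa using hl)
      exact ⟨x, rfl⟩

/-- Every point lies in a cone of each prescribed depth. -/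
lemma exists_wcat (n : ℕ) : ∀ p : Cantor, ∃ α w, α.length = n ∧ p = wcat α w := by
  induction n with
  | zero => intro p; exact ⟨[], p, rfl, (wcat_nil p).symm⟩
  | succ n ih =>
    intro p
    obtain ⟨α, w, hl, hp⟩ := ih (fun k => p (k + 1))
    refine ⟨p 0 :: α, w, by simp [hl], ?_⟩
    funext k
    cases k with
    | zero => simp [wcat_cons_zero]
    | succ k => rw [wcat_cons_succ, ← hp]

/-- The cones of `α` and `β` are disjoint. -/
def Inc (α β : Addr) : Prop := ∀ w v, wcat α w ≠ wcat β v

lemma Inc.symm {α β : Addr} (h : Inc α β) : Inc β α := fun w v e => h v w e.symm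

lemma Inc.left {α β : Addr} (h : Inc α β) (x : Addr) : Inc (α ++ x) β := by
  intro w v; rw [wcat_append]; exact h _ _

lemma Inc.right {α β : Addr} (h : Inc α β) (x : Addr) : Inc α (β ++ x) :=
  (h.symm.left x).symm

lemma Inc.both {α β : Addr} (h : Inc α β) (x y : Addr) : Inc (α ++ x) (β ++ y) :=
  (h.left x).right y

lemma inc_or {α β : Addr} (hl : α.length ≤ β.length) : Inc α β ∨ ∃ x, β = α ++ x := by
  by_cases h : Inc α β
  · exact Or.inl h
  · simp only [Inc, not_forall, not_not] at h
    obtain ⟨w, v, h⟩ := h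
    exact Or.inr (wcat_prefix h hl)

lemma inc_sib (κ : Addr) {a b : Bool} (hab : a ≠ b) : Inc (κ ++ [a]) (κ ++ [b]) := by
  intro w v h
  rw [wcat_append, wcat_append] at h
  exact hab (wcat_cons_inj (wcat_inj h)).1

lemma inc_sib' (κ : Addr) : Inc (κ ++ [false]) (κ ++ [true]) := inc_sib κ (by simp)

/-- Two cones of depth at least two do not cover Cantor space. -/
lemma exists_inc {α β : Addr} (hα : 2 ≤ α.length) (hβ : 2 ≤ β.length) :
    ∃ κ, Inc κ α ∧ Inc κ β := by
  match α, hα, β, hβ with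
  | a :: a' :: α, _, b :: b' :: β, _ =>
    by_cases hab : a = b
    · subst hab
      refine ⟨[!a], ?_, ?_⟩ <;>
      · intro w v h
        have := (wcat_cons_inj h).1
        simp at this
    · refine ⟨[a, !a'], ?_, ?_⟩
      · intro w v h
        have := (wcat_cons_inj (wcat_cons_inj h).2).1
        simp at this
      · intro w v h
        exact hab (wcat_cons_inj h).1

/-- Any two cones contain disjoint subcones. -/
lemma exists_inc_sub (κ κ' : Addr) : ∃ x y, Inc (κ ++ x) (κ' ++ y) := by
  rcases le_total κ.length κ'.length with h | h
  · rcases inc_or h with h | ⟨z, rfl⟩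
    · exact ⟨[], [], by simpa using h⟩
    · refine ⟨z ++ [false], [true], ?_⟩
      rw [← List.append_assoc]
      exact inc_sib' _
  · rcases inc_or h with h | ⟨z, rfl⟩
    · exact ⟨[], [], by simpa using h.symm⟩
    · refine ⟨[false], z ++ [true], ?_⟩
      rw [← List.append_assoc]
      exact inc_sib' _

lemma _root_.actsOn.append {g : Equiv.Perm Cantor} {α β : Addr} (h : actsOn g α β) (x : Addr) :
    actsOn g (α ++ x) (β ++ x) := by
  intro w; rw [wcat_append, wcat_append, h]

lemma _root_.actsOn.inv {g : Equiv.Perm Cantor} {α β : Addr} (h : actsOn g α β) : actsOn g⁻¹ β α := by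
  intro w; rw [← h w]; simp

lemma _root_.actsOn.mul {g h : Equiv.Perm Cantor} {α β γ : Addr} (hg : actsOn g β γ)
    (hh : actsOn h α β) : actsOn (g * h) α γ := by
  intro w; rw [Equiv.Perm.mul_apply, hh, hg]

lemma _root_.actsOn.inc {g : Equiv.Perm Cantor} {α β α' β' : Addr} (h : actsOn g α α')
    (h' : actsOn g β β') (hi : Inc α β) : Inc α' β' := by
  intro w v e
  rw [← h, ← h'] at e
  exact hi _ _ (g.injective e)

lemma wcat_ext {β β' : Addr} (hl : β.length ≤ β'.length) (h : ∀ w, wcat β w = wcat β' w) :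
    β = β' := by
  obtain ⟨x, rfl⟩ := wcat_prefix (h fun _ => false) hl
  cases x with
  | nil => simp
  | cons b x =>
    have := h fun _ => !b
    rw [wcat_append] at this
    have := congrFun (wcat_inj this) 0
    simp [wcat_cons_zero] at this

lemma _root_.actsOn.unique {g : Equiv.Perm Cantor} {α β β' : Addr} (h : actsOn g α β)
    (h' : actsOn g α β') : β = β' := by
  rcases le_total β.length β'.length with hl | hl
  · exact wcat_ext hl fun w => by rw [← h, ← h']
  · exact (wcat_ext hl fun w => by rw [← h, ← h']).symm

/-- Elements of `V` act on all sufficiently long addresses, with long images. -/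
lemma exists_acts {g : Equiv.Perm Cantor} (hg : IsPrefixSubst g) (m : ℕ) :
    ∃ N, ∀ α : Addr, N ≤ α.length → ∃ β, m ≤ β.length ∧ actsOn g α β := by
  obtain ⟨n, A, B, -, hA, -, -, hAB⟩ := hg
  refine ⟨(Finset.univ.sup fun i => (A i).length) + m, fun α hα => ?_⟩
  have : wcat α (fun _ => false) ∈ ⋃ i, cone (A i) := by rw [hA]; trivial
  obtain ⟨i, w, hw⟩ := Set.mem_iUnion.1 this
  have hi : (A i).length ≤ Finset.univ.sup fun i => (A i).length :=
    Finset.le_sup (f := fun i => (A i).length) (Finset.mem_univ i)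
  obtain ⟨x, rfl⟩ := wcat_prefix hw (by omega)
  refine ⟨B i ++ x, ?_, actsOn.append (hAB i) x⟩
  simp at hα ⊢
  omega

/-- Conversely, a bijection acting on all addresses of some length belongs to `V`. -/
lemma isPrefixSubst_of_acts {g : Equiv.Perm Cantor} {N : ℕ}
    (h : ∀ α : Addr, α.length = N → ∃ β, actsOn g α β) : IsPrefixSubst g := by
  classical
  have key : ∀ v : List.Vector Bool N, ∃ β, actsOn g v.1 β := fun v => h v.1 v.2
  choose B hB using key
  let e := Fintype.equivFin (List.Vector Bool N)
  have hinc : ∀ u v : List.Vector Bool N, u ≠ v → Inc u.1 v.1 := by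
    intro u v huv
    rcases inc_or (u.2.trans v.2.symm).le with hi | ⟨x, hx⟩
    · exact hi
    · exfalso
      apply huv
      have h1 := congrArg List.length hx
      rw [List.length_append, u.2, v.2] at h1
      have : x = [] := List.length_eq_zero_iff.1 (by omega)
      exact Subtype.ext (by simp [hx, this])
  have hdis : ∀ {α β : Addr}, Inc α β → Disjoint (cone α) (cone β) := by
    intro α β hi
    rw [Set.disjoint_left]
    rintro _ ⟨w, rfl⟩ ⟨v, hv⟩
    exact hi w v hv.symm
  refine ⟨_, fun i => (e.symm i).1, fun i => B (e.symm i), ?_, ?_, ?_, ?_, fun i => hB _⟩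
  · intro i j hij
    exact hdis (hinc _ _ (e.symm.injective.ne hij))
  · rw [Set.eq_univ_iff_forall]
    intro p
    obtain ⟨α, w, hl, rfl⟩ := exists_wcat N p
    exact Set.mem_iUnion.2 ⟨e ⟨α, hl⟩, w,
      congrArg (fun v : List.Vector Bool N => wcat v.1 w) (e.symm_apply_apply ⟨α, hl⟩)⟩
  · intro i j hij
    exact hdis (actsOn.inc (hB _) (hB _) (hinc _ _ (e.symm.injective.ne hij)))
  · rw [Set.eq_univ_iff_forall]
    intro p
    obtain ⟨α, w, hl, hp⟩ := exists_wcat N (g⁻¹ p)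
    refine Set.mem_iUnion.2 ⟨e ⟨α, hl⟩, w,
      (congrArg (fun v => wcat (B v) w) (e.symm_apply_apply ⟨α, hl⟩)).trans ?_⟩
    have := hB ⟨α, hl⟩ w
    rw [← hp] at this
    simpa using this.symm

lemma IsPrefixSubst_mul {g h : Equiv.Perm Cantor} (hg : IsPrefixSubst g)
    (hh : IsPrefixSubst h) : IsPrefixSubst (g * h) := by
  obtain ⟨N, hN⟩ := exists_acts hg 0
  obtain ⟨K, hK⟩ := exists_acts hh N
  refine isPrefixSubst_of_acts (N := K) fun α hα => ?_
  obtain ⟨β, hl, hβ⟩ := hK α hα.ge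
  obtain ⟨γ, -, hγ⟩ := hN β hl
  exact ⟨γ, actsOn.mul hγ hβ⟩

lemma IsPrefixSubst_inv {g : Equiv.Perm Cantor} (hg : IsPrefixSubst g) :
    IsPrefixSubst g⁻¹ := by
  obtain ⟨n, A, B, h1, h2, h3, h4, h5⟩ := hg
  exact ⟨n, B, A, h3, h4, h1, h2, fun i => actsOn.inv (h5 i)⟩

/-! ### Swaps of disjoint cones -/

open Classical in
/-- The map interchanging `αw` and `βw` for all `w` and fixing all other points;
meaningful when the two cones are disjoint. -/
noncomputable def swFun (α β : Addr) (p : Cantor) : Cantor :=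
  if h : ∃ w, p = wcat α w then wcat β h.choose
  else if h : ∃ w, p = wcat β w then wcat α h.choose else p

lemma swFun_left (α β : Addr) (w : Cantor) : swFun α β (wcat α w) = wcat β w := by
  have h : ∃ v, wcat α w = wcat α v := ⟨w, rfl⟩
  rw [swFun, dif_pos h, ← wcat_inj h.choose_spec]

lemma swFun_right {α β : Addr} (hi : Inc α β) (w : Cantor) :
    swFun α β (wcat β w) = wcat α w := by
  have h : ∃ v, wcat β w = wcat β v := ⟨w, rfl⟩
  have h' : ¬ ∃ v, wcat β w = wcat α v := by
    rintro ⟨v, hv⟩; exact hi _ _ hv.symm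
  rw [swFun, dif_neg h', dif_pos h, ← wcat_inj h.choose_spec]

lemma swFun_other {α β : Addr} {p : Cantor} (h : ∀ w, p ≠ wcat α w) (h' : ∀ w, p ≠ wcat β w) :
    swFun α β p = p := by
  rw [swFun, dif_neg (by simpa using h), dif_neg (by simpa using h')]

lemma cone_cases (α β : Addr) (p : Cantor) :
    (∃ w, p = wcat α w) ∨ (∃ w, p = wcat β w) ∨
      ((∀ w, p ≠ wcat α w) ∧ ∀ w, p ≠ wcat β w) := by
  by_cases h : ∃ w, p = wcat α w
  · exact Or.inl h
  · by_cases h' : ∃ w, p = wcat β w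
    · exact Or.inr (Or.inl h')
    · push Not at h h'
      exact Or.inr (Or.inr ⟨h, h'⟩)

lemma swFun_invol {α β : Addr} (hi : Inc α β) : Function.Involutive (swFun α β) := by
  intro p
  rcases cone_cases α β p with ⟨w, rfl⟩ | ⟨w, rfl⟩ | ⟨h, h'⟩
  · rw [swFun_left, swFun_right hi]
  · rw [swFun_right hi, swFun_left]
  · rw [swFun_other h h', swFun_other h h']

open Classical in
/-- The swap of two disjoint cones as a permutation (the identity if they are not disjoint). -/
noncomputable def swp (α β : Addr) : Equiv.Perm Cantor :=
  if h : Inc α β then (swFun_invol h).toPerm else 1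

lemma swp_apply {α β : Addr} (hi : Inc α β) (p : Cantor) : swp α β p = swFun α β p := by
  rw [swp, dif_pos hi]; rfl

lemma swp_left {α β : Addr} (hi : Inc α β) : actsOn (swp α β) α β := by
  intro w; rw [swp_apply hi, swFun_left]

lemma swp_right {α β : Addr} (hi : Inc α β) : actsOn (swp α β) β α := by
  intro w; rw [swp_apply hi, swFun_right hi]

lemma swp_fix {α β γ : Addr} (hi : Inc α β) (h : Inc γ α) (h' : Inc γ β) :
    actsOn (swp α β) γ γ := by
  intro w; rw [swp_apply hi, swFun_other (h w) (h' w)]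

lemma swp_other {α β : Addr} (hi : Inc α β) {p : Cantor} (h : ∀ w, p ≠ wcat α w)
    (h' : ∀ w, p ≠ wcat β w) : swp α β p = p := by
  rw [swp_apply hi, swFun_other h h']

lemma swp_conj {g : Equiv.Perm Cantor} {α β α' β' : Addr} (hi : Inc α β)
    (h : actsOn g α α') (h' : actsOn g β β') : g * swp α β * g⁻¹ = swp α' β' := by
  have hi' := h.inc h' hi
  rw [mul_inv_eq_iff_eq_mul]
  ext1 q
  simp only [Equiv.Perm.mul_apply]
  rcases cone_cases α β q with ⟨w, rfl⟩ | ⟨w, rfl⟩ | ⟨h1, h2⟩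
  · rw [swp_left hi, h, h', swp_left hi']
  · rw [swp_right hi, h, h', swp_right hi']
  · rw [swp_other hi h1 h2, swp_other hi']
    · intro w e
      rw [← h] at e
      exact h1 w (g.injective e)
    · intro w e
      rw [← h'] at e
      exact h2 w (g.injective e)

lemma swp_comm {α β : Addr} (hi : Inc α β) : swp α β = swp β α := by
  ext1 q
  rcases cone_cases α β q with ⟨w, rfl⟩ | ⟨w, rfl⟩ | ⟨h1, h2⟩
  · rw [swp_left hi, swp_right hi.symm]
  · rw [swp_right hi, swp_left hi.symm]
  · rw [swp_other hi h1 h2, swp_other hi.symm h2 h1]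

lemma wcat_split (α : Addr) (w : Cantor) : ∃ b v, wcat α w = wcat (α ++ [b]) v := by
  obtain ⟨γ, v, hl, hv⟩ := exists_wcat 1 w
  obtain ⟨b, rfl⟩ := List.length_eq_one_iff.1 hl
  exact ⟨b, v, by rw [wcat_append, ← hv]⟩

lemma swp_split {α β : Addr} (hi : Inc α β) :
    swp (α ++ [false]) (β ++ [false]) * swp (α ++ [true]) (β ++ [true]) = swp α β := by
  have h0 := hi.both [false] [false]
  have h1 := hi.both [true] [true]
  ext1 q
  rw [Equiv.Perm.mul_apply]
  rcases cone_cases α β q with ⟨w, rfl⟩ | ⟨w, rfl⟩ | ⟨h, h'⟩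
  · obtain ⟨b, v, hv⟩ := wcat_split α w
    rw [hv, (swp_left hi).append [b] v]
    cases b
    · rw [swp_fix h1 (inc_sib' _) (hi.both _ _) v, swp_left h0]
    · rw [swp_left h1, swp_fix h0 (hi.symm.both _ _) (inc_sib' _).symm v]
  · obtain ⟨b, v, hv⟩ := wcat_split β w
    rw [hv, (swp_right hi).append [b] v]
    cases b
    · rw [swp_fix h1 (hi.symm.both _ _) (inc_sib' _) v, swp_right h0]
    · rw [swp_right h1, swp_fix h0 (inc_sib' _).symm (hi.both _ _) v]
  · rw [swp_other h1, swp_other h0, swp_other hi h h'] <;>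
    · intro w; rw [wcat_append]; first | exact h _ | exact h' _

/-! ### Swaps generate `V` -/

/-- The cones `A i`, `i ∈ s`, partition Cantor space. -/
def Part {ι : Type} (s : Finset ι) (A : ι → Addr) : Prop :=
  (∀ i ∈ s, ∀ j ∈ s, i ≠ j → Inc (A i) (A j)) ∧ ∀ p, ∃ i ∈ s, ∃ w, p = wcat (A i) w

/-- A partition into cones other than the trivial one contains a pair of sibling cones:
a deepest cone and its sibling. -/
lemma Part.sib {ι : Type} {s : Finset ι} {A : ι → Addr} (h : Part s A)
    (hne : ∀ i ∈ s, A i ≠ []) :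
    ∃ i ∈ s, ∃ j ∈ s, ∃ σ, A i = σ ++ [false] ∧ A j = σ ++ [true] := by
  obtain ⟨i0, hi0, -⟩ := h.2 fun _ => false
  obtain ⟨i, hi, hmax⟩ := s.exists_max_image (fun i => (A i).length) ⟨i0, hi0⟩
  obtain ⟨σ, b, hσ⟩ : ∃ σ b, A i = σ ++ [b] :=
    ⟨_, _, (List.dropLast_append_getLast (hne i hi)).symm⟩
  obtain ⟨j, hj, w, hw⟩ := h.2 (wcat (σ ++ [!b]) fun _ => false)
  have hlen : (A j).length ≤ (σ ++ [!b]).length := by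
    have := hmax j hj
    simp [hσ] at this ⊢
    exact this
  obtain ⟨x, hx⟩ := wcat_prefix hw.symm hlen
  have hAj : A j = σ ++ [!b] := by
    rcases List.eq_nil_or_concat x with rfl | ⟨y, c, rfl⟩
    · simpa using hx.symm
    · exfalso
      rw [List.concat_eq_append, ← List.append_assoc] at hx
      obtain ⟨hx1, -⟩ := List.append_inj' hx rfl
      have hij : i ≠ j := by
        rintro rfl
        have := congrArg List.length hx1
        simp [hσ] at this
      apply h.1 i hi j hj hij (fun _ => false) (wcat (y ++ [b]) fun _ => false)
      rw [← wcat_append, hσ, hx1, List.append_assoc]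
  cases b
  · exact ⟨i, hi, j, hj, σ, hσ, hAj⟩
  · exact ⟨j, hj, i, hi, σ, hAj, hσ⟩

lemma Part.image {ι : Type} {s : Finset ι} {A B : ι → Addr} (h : Part s A)
    {g : Equiv.Perm Cantor} (hg : ∀ i ∈ s, actsOn g (A i) (B i)) : Part s B := by
  refine ⟨fun i hi j hj hij => (hg i hi).inc (hg j hj) (h.1 i hi j hj hij), fun p => ?_⟩
  obtain ⟨i, hi, w, hw⟩ := h.2 (g⁻¹ p)
  refine ⟨i, hi, w, ?_⟩
  rw [← hg i hi, ← hw]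
  simp

lemma Part.nil_single {ι : Type} {s : Finset ι} {A : ι → Addr} (h : Part s A)
    {i : ι} (hi : i ∈ s) (hA : A i = []) : ∀ j ∈ s, j = i := by
  intro j hj
  by_contra hij
  have := h.1 j hj i hi hij (fun _ => false) (wcat (A j) fun _ => false)
  rw [hA, wcat_nil] at this
  exact this rfl

/-- Composing with a swap of two range cones realizes a transposition of the index set. -/
lemma exists_transpose {ι : Type} [DecidableEq ι] {H : Set (Equiv.Perm Cantor)}
    (hH : IsSubgroupSet H) (hsw : ∀ α β, Inc α β → swp α β ∈ H) {s : Finset ι}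
    {A B : ι → Addr} (hB : Part s B) {g : Equiv.Perm Cantor}
    (hg : ∀ i ∈ s, actsOn g (A i) (B i)) {a b : ι} (ha : a ∈ s) (hb : b ∈ s) :
    ∃ h ∈ H, ∀ i ∈ s, actsOn (h * g) (A i) (B (Equiv.swap a b i)) := by
  by_cases hab : a = b
  · subst hab
    exact ⟨1, hH.1, fun i hi => by simpa using hg i hi⟩
  have hinc := hB.1 a ha b hb hab
  refine ⟨swp (B a) (B b), hsw _ _ hinc, fun i hi => ?_⟩
  refine actsOn.mul ?_ (hg i hi)
  by_cases hia : i = a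
  · subst hia; rw [Equiv.swap_apply_left]; exact swp_left hinc
  by_cases hib : i = b
  · subst hib; rw [Equiv.swap_apply_right]; exact swp_right hinc
  rw [Equiv.swap_apply_of_ne_of_ne hia hib]
  exact swp_fix hinc (hB.1 i hi a ha hia) (hB.1 i hi b hb hib)

/-- Induction on the number of cones: after permuting the range cones by swaps, a pair of
sibling cones is carried to a pair of sibling cones, and each pair merges into one cone. -/
lemma mem_of_swaps {ι : Type} [DecidableEq ι] {H : Set (Equiv.Perm Cantor)}
    (hH : IsSubgroupSet H) (hsw : ∀ α β, Inc α β → swp α β ∈ H) (n : ℕ) :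
    ∀ (s : Finset ι) (A B : ι → Addr) (g : Equiv.Perm Cantor), s.card = n → Part s A →
      (∀ i ∈ s, actsOn g (A i) (B i)) → g ∈ H := by
  induction n with
  | zero =>
    intro s A B g hs hA _
    obtain ⟨i, hi, -⟩ := hA.2 fun _ => false
    rw [Finset.card_eq_zero.1 hs] at hi
    simp at hi
  | succ n ih =>
    intro s A B g hs hA hg
    have hB := hA.image hg
    have htriv : ∀ i ∈ s, (∀ j ∈ s, j = i) → g ∈ H := by
      intro i hi hone
      have hroot : ∀ C : ι → Addr, Part s C → C i = [] := by
        intro C hC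
        by_contra hne
        obtain ⟨k, hk, l, hl, σ, h1, h2⟩ := hC.sib (fun j hj => by rwa [hone j hj])
        rw [hone k hk] at h1
        rw [hone l hl, h1] at h2
        simp at h2
      have h1 := hg i hi
      rw [hroot A hA, hroot B hB] at h1
      have : g = 1 := by
        ext1 p
        simpa [wcat_nil] using h1 p
      rw [this]
      exact hH.1
    by_cases hAne : ∀ i ∈ s, A i ≠ []
    swap
    · push Not at hAne
      obtain ⟨i, hi, h0⟩ := hAne
      exact htriv i hi (hA.nil_single hi h0)
    by_cases hBne : ∀ i ∈ s, B i ≠ []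
    swap
    · push Not at hBne
      obtain ⟨i, hi, h0⟩ := hBne
      exact htriv i hi (hB.nil_single hi h0)
    obtain ⟨i, hi, j, hj, σ, hAi, hAj⟩ := hA.sib hAne
    obtain ⟨k, hk, l, hl, τ, hBk, hBl⟩ := hB.sib hBne
    have hij : i ≠ j := by rintro rfl; rw [hAi] at hAj; simp at hAj
    have hkl : k ≠ l := by rintro rfl; rw [hBk] at hBl; simp at hBl
    obtain ⟨h1, hh1, hg1⟩ := exists_transpose hH hsw hB hg hi hk
    have hB1 := hA.image hg1
    have hl' : Equiv.swap i k l ∈ s := by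
      rcases eq_or_ne l i with rfl | h
      · simpa using hk
      · rwa [Equiv.swap_apply_of_ne_of_ne h hkl.symm]
    have hl'i : Equiv.swap i k l ≠ i := by
      intro h
      apply hkl
      have := congrArg (Equiv.swap i k) h
      simpa using this.symm
    obtain ⟨h2, hh2, hg2⟩ := exists_transpose hH hsw hB1 hg1 hj hl'
    have hi2 := hg2 i hi
    have hj2 := hg2 j hj
    rw [Equiv.swap_apply_of_ne_of_ne hij hl'i.symm, Equiv.swap_apply_left, hBk, hAi] at hi2
    rw [Equiv.swap_apply_left, Equiv.swap_apply_self, hBl, hAj] at hj2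
    have hστ : actsOn (h2 * (h1 * g)) σ τ := by
      intro w
      obtain ⟨γ, v, hl, rfl⟩ := exists_wcat 1 w
      obtain ⟨b, rfl⟩ := List.length_eq_one_iff.1 hl
      rw [← wcat_append, ← wcat_append]
      cases b
      · exact hi2 v
      · exact hj2 v
    have hmem : h2 * (h1 * g) ∈ H := by
      refine ih (s.erase j) (Function.update A i σ)
        (Function.update (fun m => B (Equiv.swap i k (Equiv.swap j (Equiv.swap i k l) m))) i τ)
        _ (by rw [Finset.card_erase_of_mem hj, hs]; rfl) ⟨?_, ?_⟩ ?_
      · have hincσ : ∀ m ∈ s, m ≠ i → m ≠ j → Inc σ (A m) := by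
          intro m hm hmi hmj w v e
          obtain ⟨b, w', hw'⟩ := wcat_split σ w
          rw [hw'] at e
          cases b
          · exact hA.1 i hi m hm hmi.symm w' v (by rw [hAi, e])
          · exact hA.1 j hj m hm hmj.symm w' v (by rw [hAj, e])
        intro a ha b hb hab
        obtain ⟨haj, ha⟩ := Finset.mem_erase.1 ha
        obtain ⟨hbj, hb⟩ := Finset.mem_erase.1 hb
        by_cases hai : a = i
        · subst hai
          rw [Function.update_self, Function.update_of_ne hab.symm]
          exact hincσ b hb hab.symm hbj
        · rw [Function.update_of_ne hai]
          by_cases hbi : b = i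
          · subst hbi
            rw [Function.update_self]
            exact (hincσ a ha hab haj).symm
          · rw [Function.update_of_ne hbi]
            exact hA.1 a ha b hb hab
      · intro p
        obtain ⟨m, hm, w, hw⟩ := hA.2 p
        by_cases hmi : m = i
        · subst hmi
          refine ⟨m, Finset.mem_erase.2 ⟨hij, hm⟩, wcat [false] w, ?_⟩
          rw [Function.update_self, ← wcat_append, ← hAi, hw]
        by_cases hmj : m = j
        · subst hmj
          refine ⟨i, Finset.mem_erase.2 ⟨hij, hi⟩, wcat [true] w, ?_⟩
          rw [Function.update_self, ← wcat_append, ← hAj, hw]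
        · exact ⟨m, Finset.mem_erase.2 ⟨hmj, hm⟩, w, by rw [Function.update_of_ne hmi, hw]⟩
      · intro m hm
        obtain ⟨hmj, hm⟩ := Finset.mem_erase.1 hm
        by_cases hmi : m = i
        · subst hmi
          rw [Function.update_self, Function.update_self]
          exact hστ
        · rw [Function.update_of_ne hmi, Function.update_of_ne hmi]
          exact hg2 m hm
    have := hH.2.1 _ (hH.2.2 _ hh1) _ (hH.2.1 _ (hH.2.2 _ hh2) _ hmem)
    simpa using this

lemma VSet_subset_of_swaps {H : Set (Equiv.Perm Cantor)}
    (hH : IsSubgroupSet H) (hsw : ∀ α β, Inc α β → swp α β ∈ H) : VSet ⊆ H := by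
  rintro g ⟨n, A, B, h1, h2, -, -, h5⟩
  refine mem_of_swaps hH hsw _ Finset.univ A B g rfl ⟨?_, ?_⟩ fun i _ => h5 i
  · intro i _ j _ hij w v e
    exact Set.disjoint_left.1 (h1 i j hij) ⟨w, rfl⟩ ⟨v, e.symm⟩
  · intro p
    have : p ∈ ⋃ i, cone (A i) := by rw [h2]; trivial
    obtain ⟨i, w, hw⟩ := Set.mem_iUnion.1 this
    exact ⟨i, Finset.mem_univ i, w, hw.symm⟩

/-! ### Stabilizers of type systems -/

section Stab

variable {r : Addr → Addr → Prop}

lemma coh_append (hr : IsTypeSystem r) (x : Addr) :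
    ∀ {α β : Addr}, r α β → r (α ++ x) (β ++ x) := by
  induction x with
  | nil => intro α β h; simpa using h
  | cons b x ih =>
    intro α β h
    rw [List.append_cons, List.append_cons β]
    apply ih
    cases b
    · exact (hr.2.1 _ _ h).1
    · exact (hr.2.1 _ _ h).2

lemma red_append (hr : IsTypeSystem r) (N : ℕ) :
    ∀ {α β : Addr}, (∀ x : Addr, x.length = N → r (α ++ x) (β ++ x)) → r α β := by
  induction N with
  | zero => intro α β h; simpa using h [] rfl
  | succ N ih =>
    intro α β h
    have key : ∀ b : Bool, r (α ++ [b]) (β ++ [b]) := by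
      intro b
      apply ih
      intro x hx
      have := h (b :: x) (by simp [hx])
      rwa [List.append_cons, List.append_cons β] at this
    exact hr.2.2 _ _ (key false) (key true)

/-- `g` preserves equivalence and inequivalence wherever its action on addresses is defined.
For type systems this agrees with the cofinite version, see `mem_stabSet`. -/
def StabAll (r : Addr → Addr → Prop) (g : Equiv.Perm Cantor) : Prop :=
  ∀ α α' β β', actsOn g α β → actsOn g α' β' → (r α α' ↔ r β β')

/-- Coherence and reducedness transport equivalence between an address and its descendants of a
fixed large depth, which all lie in the cofinite set. -/
lemma mem_stabSet (hr : IsTypeSystem r) {g : Equiv.Perm Cantor} :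
    g ∈ StabSet r ↔ IsPrefixSubst g ∧ StabAll r g := by
  constructor
  · rintro ⟨hg, Ω₀, hfin, -, h⟩
    refine ⟨hg, fun α α' β β' h1 h2 => ?_⟩
    obtain ⟨N, hN⟩ := (hfin.image List.length).bddAbove
    have hmem : ∀ γ x : Addr, x.length = N + 1 → γ ++ x ∈ Ω₀ := by
      intro γ x hx
      by_contra hc
      have := hN ⟨γ ++ x, hc, rfl⟩
      simp at this
      omega
    constructor
    · intro hαα
      refine red_append hr (N + 1) fun x hx => ?_
      exact (h _ (hmem α x hx) _ (hmem α' x hx) _ _ (h1.append x) (h2.append x)).1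
        (coh_append hr x hαα)
    · intro hββ
      refine red_append hr (N + 1) fun x hx => ?_
      exact (h _ (hmem α x hx) _ (hmem α' x hx) _ _ (h1.append x) (h2.append x)).2
        (coh_append hr x hββ)
  · rintro ⟨hg, h⟩
    obtain ⟨N, hN⟩ := exists_acts hg 0
    refine ⟨hg, {α | ∃ β, actsOn g α β}, ?_, fun α hα => hα, fun α _ α' _ β β' => h α α' β β'⟩
    refine (List.finite_length_lt Bool N).subset fun α hα => ?_
    by_contra hc
    obtain ⟨β, -, hβ⟩ := hN α (not_lt.1 hc)
    exact hα ⟨β, hβ⟩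

lemma isSubgroupSet_stabSet (hr : IsTypeSystem r) : IsSubgroupSet (StabSet r) := by
  refine ⟨(mem_stabSet hr).2 ⟨?_, ?_⟩, fun g hg h hh => ?_, fun g hg => ?_⟩
  · exact isPrefixSubst_of_acts (N := 0) fun α _ => ⟨α, fun w => rfl⟩
  · intro α α' β β' h h'
    rw [h.unique (fun w => rfl), h'.unique (fun w => rfl)]
  · rw [mem_stabSet hr] at *
    refine ⟨IsPrefixSubst_mul hg.1 hh.1, fun α α' γ γ' h1 h2 => ?_⟩
    obtain ⟨N, hN⟩ := exists_acts hg.1 0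
    obtain ⟨K, hK⟩ := exists_acts hh.1 N
    -- Both maps act on all words extending `α`, `α'` by `K` letters.
    have key : ∀ x : Addr, x.length = K →
        (r (α ++ x) (α' ++ x) ↔ r (γ ++ x) (γ' ++ x)) := by
      intro x hx
      obtain ⟨β, hl, hβ⟩ := hK (α ++ x) (by simp [hx])
      obtain ⟨β', hl', hβ'⟩ := hK (α' ++ x) (by simp [hx])
      obtain ⟨δ, -, hδ⟩ := hN β hl
      obtain ⟨δ', -, hδ'⟩ := hN β' hl'
      rw [hh.2 _ _ _ _ hβ hβ', hg.2 _ _ _ _ hδ hδ',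
        (hδ.mul hβ).unique (h1.append x), (hδ'.mul hβ').unique (h2.append x)]
    exact ⟨fun e => red_append hr K fun x hx => (key x hx).1 (coh_append hr x e),
      fun e => red_append hr K fun x hx => (key x hx).2 (coh_append hr x e)⟩
  · rw [mem_stabSet hr] at *
    refine ⟨IsPrefixSubst_inv hg.1, fun α α' β β' h h' => ?_⟩
    have h1 := h.inv
    have h2 := h'.inv
    rw [inv_inv] at h1 h2
    exact (hg.2 _ _ _ _ h1 h2).symm

lemma swp_image {α β : Addr} (hi : Inc α β) (γ : Addr) (hα : α.length ≤ γ.length)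
    (hβ : β.length ≤ γ.length) :
    (∃ x, γ = α ++ x ∧ actsOn (swp α β) γ (β ++ x)) ∨
      (∃ x, γ = β ++ x ∧ actsOn (swp α β) γ (α ++ x)) ∨ actsOn (swp α β) γ γ := by
  rcases inc_or hα with h1 | ⟨x, rfl⟩
  · rcases inc_or hβ with h2 | ⟨x, rfl⟩
    · exact Or.inr (Or.inr (swp_fix hi h1.symm h2.symm))
    · exact Or.inr (Or.inl ⟨x, rfl, (swp_right hi).append x⟩)
  · exact Or.inl ⟨x, rfl, (swp_left hi).append x⟩

lemma swp_mem_V {α β : Addr} (hi : Inc α β) : IsPrefixSubst (swp α β) := by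
  refine isPrefixSubst_of_acts (N := α.length + β.length) fun γ hγ => ?_
  rcases swp_image hi γ (by omega) (by omega) with ⟨x, -, h⟩ | ⟨x, -, h⟩ | h <;> exact ⟨_, h⟩

/-- Swaps of disjoint cones of the same type stabilize the type system. -/
lemma swp_mem_stab (hr : IsTypeSystem r) {α β : Addr} (hi : Inc α β) (hαβ : r α β) :
    swp α β ∈ StabSet r := by
  rw [mem_stabSet hr]
  refine ⟨swp_mem_V hi, ?_⟩
  have hfix : ∀ γ δ, actsOn (swp α β) γ δ → r γ δ := by
    intro γ δ h
    refine red_append hr (α.length + β.length) fun x hx => ?_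
    rcases swp_image hi (γ ++ x) (by simp; omega) (by simp; omega) with
      ⟨y, hy, h'⟩ | ⟨y, hy, h'⟩ | h'
    · rw [(h.append x).unique h', hy]
      exact coh_append hr y hαβ
    · rw [(h.append x).unique h', hy]
      exact coh_append hr y (hr.1.symm hαβ)
    · rw [(h.append x).unique h']
      exact hr.1.refl _
  intro γ γ' δ δ' h h'
  have e := hfix _ _ h
  have e' := hfix _ _ h'
  exact ⟨fun k => hr.1.trans (hr.1.symm e) (hr.1.trans k e'),
    fun k => hr.1.trans e (hr.1.trans k (hr.1.symm e'))⟩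

/-- Every cone contains a cone of every type. -/
def Dense (r : Addr → Addr → Prop) : Prop := ∀ κ α : Addr, ∃ x, r (κ ++ x) α

lemma stabSet_ne (hr : IsTypeSystem r) (hd : Dense r) (hnt : ∃ α β, ¬ r α β) :
    StabSet r ≠ VSet := by
  intro h
  obtain ⟨α, β, hαβ⟩ := hnt
  obtain ⟨x, hx⟩ := hd [false] α
  obtain ⟨y, hy⟩ := hd [true, false] β
  obtain ⟨z, hz⟩ := hd [true, true] α
  have h1 : Inc ([false] ++ x) ([true, false] ++ y) :=
    (inc_sib' []).both x ([false] ++ y)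
  have h2 : Inc ([true, true] ++ z) ([false] ++ x) :=
    (inc_sib' []).symm.both ([true] ++ z) x
  have h3 : Inc ([true, true] ++ z) ([true, false] ++ y) :=
    (inc_sib' [true]).symm.both z y
  have hm : swp ([false] ++ x) ([true, false] ++ y) ∈ StabSet r := by
    rw [h]; exact swp_mem_V h1
  have := (((mem_stabSet hr).1 hm).2 _ _ _ _ (swp_left h1) (swp_fix h1 h2 h3)).1
    (hr.1.trans hx (hr.1.symm hz))
  exact hαβ (hr.1.symm (hr.1.trans (hr.1.symm hy) (hr.1.trans this hz)))

/-- The stabilizer determines the type system. -/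
lemma le_of_stabSet_eq {s : Addr → Addr → Prop} (hr : IsTypeSystem r) (hs : IsTypeSystem s)
    (hdr : Dense r) (hds : Dense s) (h : StabSet r = StabSet s) {α β : Addr} (hαβ : r α β) :
    s α β := by
  -- Disjoint cones that do not cover Cantor space.
  have main : ∀ α β κ : Addr, r α β → Inc α β → Inc κ α → Inc κ β → s α β := by
    intro α β κ e hi h1 h2
    have hm := swp_mem_stab hr hi e
    rw [h, mem_stabSet hs] at hm
    obtain ⟨x, hx⟩ := hds κ α
    have := (hm.2 _ _ _ _ (swp_fix hi (h1.left x) (h2.left x)) (swp_left hi)).1 hx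
    exact hs.1.trans (hs.1.symm hx) this
  -- Passing to grandchildren gives room for a third cone of the same type.
  refine red_append hs 2 fun x hx => ?_
  have e := coh_append hr x hαβ
  obtain ⟨κ, h1, h2⟩ := exists_inc (α := α ++ x) (β := β ++ x) (by simp [hx]) (by simp [hx])
  obtain ⟨y, hy⟩ := hdr (κ ++ [false]) (α ++ x)
  have i1 : Inc (κ ++ [false] ++ y) (α ++ x) := (h1.left _).left _
  have i2 : Inc (κ ++ [false] ++ y) (β ++ x) := (h2.left _).left _
  have i3 : Inc (κ ++ [true]) (κ ++ [false] ++ y) := (inc_sib' κ).symm.right y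
  have s1 := main _ _ _ hy i1 i3 (h1.left _)
  have s2 := main _ _ _ (hr.1.trans hy e) i2 i3 (h2.left _)
  exact hs.1.trans (hs.1.symm s1) s2

/-! ### Maximality -/

/-- The relation on types induced by an overgroup `H` of the stabilizer: any two disjoint
cones of the types of `α` and `β` that do not cover Cantor space are swapped by `H`. -/
def SwRel (r : Addr → Addr → Prop) (H : Set (Equiv.Perm Cantor)) (α β : Addr) : Prop :=
  ∀ α' β', r α' α → r β' β → Inc α' β' → (∃ κ, Inc κ α' ∧ Inc κ β') → swp α' β' ∈ H

lemma conj_mem {H : Set (Equiv.Perm Cantor)} (hH : IsSubgroupSet H) {g : Equiv.Perm Cantor}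
    (hg : g ∈ H) {α β α' β' : Addr} (hi : Inc α β) (h : actsOn g α α') (h' : actsOn g β β')
    (hm : swp α β ∈ H) : swp α' β' ∈ H := by
  rw [← swp_conj hi h h']
  exact hH.2.1 _ (hH.2.1 _ hg _ hm) _ (hH.2.2 _ hg)

lemma SwRel.of_rel (hr : IsTypeSystem r) {H : Set (Equiv.Perm Cantor)} (hle : StabSet r ⊆ H)
    {α β : Addr} (h : r α β) : SwRel r H α β := fun _ _ h1 h2 hi _ =>
  hle (swp_mem_stab hr hi (hr.1.trans h1 (hr.1.trans h (hr.1.symm h2))))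

lemma isTypeSystem_swRel (hr : IsTypeSystem r) (hd : Dense r) {H : Set (Equiv.Perm Cantor)}
    (hH : IsSubgroupSet H) (hle : StabSet r ⊆ H) : IsTypeSystem (SwRel r H) := by
  refine ⟨⟨fun α => SwRel.of_rel hr hle (hr.1.refl α), ?_, ?_⟩, ?_, ?_⟩
  · intro α β h α' β' h1 h2 hi ⟨κ, k1, k2⟩
    rw [swp_comm hi]
    exact h _ _ h2 h1 hi.symm ⟨κ, k2, k1⟩
  · intro α β γ h h' α' γ' h1 h2 hi ⟨κ, k1, k2⟩
    obtain ⟨x, hx⟩ := hd (κ ++ [false]) β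
    have i1 : Inc α' (κ ++ [false] ++ x) := ((k1.left _).left _).symm
    have i2 : Inc (κ ++ [false] ++ x) γ' := (k2.left _).left _
    have i3 : Inc (κ ++ [true]) (κ ++ [false] ++ x) := (inc_sib' κ).symm.right x
    have m1 := h _ _ h1 hx i1 ⟨_, k1.left _, i3⟩
    have m2 := h' _ _ hx h2 i2 ⟨_, i3, k2.left _⟩
    exact conj_mem hH m2 i1 (swp_fix i2 i1 hi) (swp_left i2) m1
  · have main : ∀ α β (b : Bool), SwRel r H α β → SwRel r H (α ++ [b]) (β ++ [b]) := by
      intro α β b h α' β' h1 h2 hi ⟨κ, k1, k2⟩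
      obtain ⟨x, hx⟩ := hd (κ ++ [false]) α
      obtain ⟨y, hy⟩ := hd (κ ++ [true] ++ [false]) β
      have k1' : ∀ z, Inc (κ ++ z) α' := k1.left
      have k2' : ∀ z, Inc (κ ++ z) β' := k2.left
      have i1 : Inc (κ ++ [false] ++ x) (κ ++ [true] ++ [false] ++ y) :=
        ((inc_sib' κ).left x).right [false] |>.right y
      have i2 : Inc (κ ++ [true] ++ [true]) (κ ++ [false] ++ x) :=
        (inc_sib' κ).symm.both _ _
      have i3 : Inc (κ ++ [true] ++ [true]) (κ ++ [true] ++ [false] ++ y) :=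
        (inc_sib' _).symm.right _
      have ia : Inc (κ ++ [false] ++ x) α' := (k1.left _).left _
      have ib : Inc (κ ++ [true] ++ [false] ++ y) α' := ((k1.left _).left _).left _
      have ic : Inc (κ ++ [true] ++ [false] ++ y) β' := ((k2.left _).left _).left _
      have u := h _ _ hx hy i1 ⟨_, i2, i3⟩
      have a := hle (swp_mem_stab hr (ia.left [b])
        (hr.1.trans (coh_append hr [b] hx) (hr.1.symm h1)))
      have c := conj_mem hH u (ia.left [b]) ((swp_left i1).append [b])
        (swp_fix i1 ia.symm ib.symm) a
      have w := hle (swp_mem_stab hr (ic.left [b])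
        (hr.1.trans (coh_append hr [b] hy) (hr.1.symm h2)))
      have := conj_mem hH w (ib.left [b]) (swp_left (ic.left [b]))
        (swp_fix (ic.left [b]) (ib.left [b]).symm hi) c
      rwa [swp_comm hi]
    exact fun α β h => ⟨main α β false h, main α β true h⟩
  · intro α β h0 h1 α' β' e1 e2 hi ⟨κ, k1, k2⟩
    rw [← swp_split hi]
    exact hH.2.1 _ (h0 _ _ (coh_append hr _ e1) (coh_append hr _ e2) (hi.both _ _)
      ⟨κ, k1.right _, k2.right _⟩) _ (h1 _ _ (coh_append hr _ e1) (coh_append hr _ e2)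
      (hi.both _ _) ⟨κ, k1.right _, k2.right _⟩)

lemma move_left (hr : IsTypeSystem r) {H : Set (Equiv.Perm Cantor)}
    (hH : IsSubgroupSet H) (hle : StabSet r ⊆ H) {α β α' : Addr} (hm : swp α β ∈ H)
    (hi : Inc α β) (h : r α α') (h1 : Inc α α') (h2 : Inc α' β) : swp α' β ∈ H :=
  conj_mem hH (hle (swp_mem_stab hr h1 h)) hi (swp_left h1) (swp_fix h1 hi.symm h2.symm) hm

lemma move_right (hr : IsTypeSystem r) {H : Set (Equiv.Perm Cantor)}
    (hH : IsSubgroupSet H) (hle : StabSet r ⊆ H) {α β β' : Addr} (hm : swp α β ∈ H)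
    (hi : Inc α β) (h : r β β') (h1 : Inc β β') (h2 : Inc α β') : swp α β' ∈ H :=
  conj_mem hH (hle (swp_mem_stab hr h1 h)) hi (swp_fix h1 hi h2) (swp_left h1) hm

/-- A single swap in `H` suffices for `SwRel`: the pair of cones is moved to any other pair of
the same types through two auxiliary pairs of small cones. -/
lemma swRel_of_mem (hr : IsTypeSystem r) (hd : Dense r) {H : Set (Equiv.Perm Cantor)}
    (hH : IsSubgroupSet H) (hle : StabSet r ⊆ H) {α β κ : Addr} (hm : swp α β ∈ H)
    (hi : Inc α β) (k1 : Inc κ α) (k2 : Inc κ β) : SwRel r H α β := by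
  intro α' β' hα hβ hi' ⟨κ', k1', k2'⟩
  obtain ⟨u, v, huv⟩ := exists_inc_sub κ κ'
  obtain ⟨x1, a1⟩ := hd (κ ++ u ++ [false]) α
  obtain ⟨y1, b1⟩ := hd (κ ++ u ++ [true]) β
  obtain ⟨x2, a2⟩ := hd (κ' ++ v ++ [false]) α
  obtain ⟨y2, b2⟩ := hd (κ' ++ v ++ [true]) β
  have ext : ∀ {κ δ : Addr}, Inc κ δ → ∀ u v w : Addr, Inc (κ ++ u ++ v ++ w) δ :=
    fun h u v w => ((h.left u).left v).left w
  have cross : ∀ s t s' t' : Addr, Inc (κ ++ u ++ s ++ t) (κ' ++ v ++ s' ++ t') :=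
    fun s t s' t' => (((huv.left s).left t).right s').right t'
  have j1 : Inc (κ ++ u ++ [false] ++ x1) (κ ++ u ++ [true] ++ y1) := (inc_sib' _).both _ _
  have j2 : Inc (κ' ++ v ++ [false] ++ x2) (κ' ++ v ++ [true] ++ y2) := (inc_sib' _).both _ _
  have s1 := move_left hr hH hle hm hi (hr.1.symm a1) (ext k1 _ _ _).symm (ext k2 _ _ _)
  have s2 := move_right hr hH hle s1 (ext k2 _ _ _) (hr.1.symm b1) (ext k2 _ _ _).symm j1
  have s3 := move_left hr hH hle s2 j1 (hr.1.trans a1 (hr.1.symm a2)) (cross _ _ _ _)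
    (cross _ _ _ _).symm
  have s4 := move_right hr hH hle s3 (cross _ _ _ _).symm (hr.1.trans b1 (hr.1.symm b2))
    (cross _ _ _ _) j2
  have s5 := move_left hr hH hle s4 j2 (hr.1.trans a2 (hr.1.symm hα)) (ext k1' _ _ _)
    (ext k1' _ _ _).symm
  exact move_right hr hH hle s5 (ext k1' _ _ _).symm (hr.1.trans b2 (hr.1.symm hβ))
    (ext k2' _ _ _) hi'

/-- If the relation induced by `H` is no coarser than `r`, then `H` preserves `r`. -/
lemma rel_of_mem (hr : IsTypeSystem r) (hd : Dense r) {H : Set (Equiv.Perm Cantor)}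
    (hH : IsSubgroupSet H) (hle : StabSet r ⊆ H) (hV : H ⊆ VSet)
    (hE : ∀ α β, SwRel r H α β → r α β) {g : Equiv.Perm Cantor} (hg : g ∈ H)
    {α α' β β' : Addr} (h : actsOn g α β) (h' : actsOn g α' β') (hα : r α α') : r β β' := by
  refine red_append hr 2 fun x hx => ?_
  obtain ⟨κ, k1, k2⟩ := exists_inc (α := α ++ x) (β := α' ++ x) (by simp [hx]) (by simp [hx])
  obtain ⟨N, hN⟩ := exists_acts (hV hg) 2
  obtain ⟨y, hy⟩ := hd (κ ++ List.replicate N false) (α ++ x)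
  obtain ⟨δ, hδl, hδ⟩ := hN (κ ++ List.replicate N false ++ y) (by simp; omega)
  have main : ∀ γ ε : Addr, r (κ ++ List.replicate N false ++ y) γ → Inc κ γ →
      actsOn g γ ε → 2 ≤ ε.length → r δ ε := by
    intro γ ε e hκ hγ hl
    have i1 : Inc (κ ++ List.replicate N false ++ y) γ := (hκ.left _).left _
    have m := conj_mem hH hg i1 hδ hγ (hle (swp_mem_stab hr i1 e))
    obtain ⟨κ', j1, j2⟩ := exists_inc hδl hl
    exact hE _ _ (swRel_of_mem hr hd hH hle m (hδ.inc hγ i1) j1 j2)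
  have e1 := main _ _ hy k1 (h.append x) (by simp [hx])
  have e2 := main _ _ (hr.1.trans hy (coh_append hr x hα)) k2 (h'.append x) (by simp [hx])
  exact hr.1.trans (hr.1.symm e1) e2

lemma maximal_of_simple (hs : SimpleTS r) (hd : Dense r) :
    IsMaximalSubgroupOfV (StabSet r) := by
  obtain ⟨hr, hnt, hsimple⟩ := hs
  refine ⟨isSubgroupSet_stabSet hr, fun g hg => hg.1, stabSet_ne hr hd hnt, ?_⟩
  intro H hH hle hV
  rcases hsimple (SwRel r H) ⟨isTypeSystem_swRel hr hd hH hle,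
    fun α β => SwRel.of_rel hr hle⟩ with hE | hE
  · left
    refine Set.Subset.antisymm (fun g hg => (mem_stabSet hr).2 ⟨hV hg, ?_⟩) hle
    intro α α' β β' h h'
    exact ⟨rel_of_mem hr hd hH hle hV (fun α β => (hE α β).1) hg h h',
      rel_of_mem hr hd hH hle hV (fun α β => (hE α β).1) (hH.2.2 _ hg) h.inv h'.inv⟩
  · right
    refine Set.Subset.antisymm hV (VSet_subset_of_swaps hH fun α β hi => ?_)
    -- Splitting a swap into two leaves room outside each of the two smaller swaps.
    rw [← swp_split hi]
    refine hH.2.1 _ ?_ _ ?_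
    · exact hE _ _ _ _ (hr.1.refl _) (hr.1.refl _) (hi.both _ _)
        ⟨α ++ [true], (inc_sib' α).symm, hi.both _ _⟩
    · exact hE _ _ _ _ (hr.1.refl _) (hr.1.refl _) (hi.both _ _)
        ⟨α ++ [false], inc_sib' α, hi.both _ _⟩

/-- Swapping a half of Cantor space containing a given point with infinitely many disjoint cones
of the same type in the other half gives the point an infinite orbit. -/
lemma no_finite_stable (hr : IsTypeSystem r) (hd : Dense r) (D : Set Cantor) (hD : D.Finite)
    (hne : D.Nonempty) : ¬ ∀ g ∈ StabSet r, (fun w => g w) '' D = D := by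
  intro h
  obtain ⟨p, hp⟩ := hne
  obtain ⟨α, w, hl, rfl⟩ := exists_wcat 1 p
  obtain ⟨b, rfl⟩ := List.length_eq_one_iff.1 hl
  -- Infinitely many disjoint cones of the type of `[b]` lie inside the cone of `[!b]`.
  have hcopy : ∀ n : ℕ, ∃ x, r ([!b] ++ (List.replicate n false ++ [true]) ++ x) [b] :=
    fun n => hd _ _
  choose x hx using hcopy
  have hi : ∀ n, Inc [b] ([!b] ++ (List.replicate n false ++ [true]) ++ x n) := fun n =>
    ((inc_sib [] (a := b) (b := !b) (by simp)).right _).right _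
  have hmem : ∀ n, wcat ([!b] ++ (List.replicate n false ++ [true]) ++ x n) w ∈ D := by
    intro n
    rw [← h _ (swp_mem_stab hr (hi n) (hr.1.symm (hx n)))]
    exact ⟨_, hp, swp_left (hi n) w⟩
  have hrep : ∀ m n : ℕ, ∀ u v : Cantor,
      wcat (List.replicate m false ++ [true]) u = wcat (List.replicate n false ++ [true]) v →
      m = n := by
    intro m
    induction m with
    | zero =>
      intro n u v e
      cases n with
      | zero => rfl
      | succ n =>
        rw [List.replicate_succ, List.cons_append] at e
        have := (wcat_cons_inj e).1
        simp at this
    | succ m ih =>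
      intro n u v e
      cases n with
      | zero =>
        rw [List.replicate_succ, List.cons_append] at e
        have := (wcat_cons_inj e).1
        simp at this
      | succ n =>
        rw [List.replicate_succ, List.replicate_succ, List.cons_append, List.cons_append] at e
        rw [ih n u v (wcat_cons_inj e).2]
  refine Set.infinite_of_injective_forall_mem (fun m n e => ?_) hmem hD
  simp only [List.append_assoc [!b], wcat_append [!b]] at e
  have e' := wcat_inj e
  rw [wcat_append, wcat_append (List.replicate n false ++ [true])] at e'
  exact hrep m n _ _ e'

end Stab

/-! ### Type systems from binary sequences -/

/-- The transition `x_n ↦ (x_{n+1}, x_{f n})` with `f n ∈ {0, 1}`. -/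
def step (f : ℕ → Bool) (n : ℕ) (b : Bool) : ℕ :=
  if b then (if f n then 1 else 0) else n + 1

/-- The index of the type of an address, reading it from type `x_0`. -/
def state (f : ℕ → Bool) (α : Addr) : ℕ := α.foldl (step f) 0

/-- The relation of having the same type. -/
def rel (f : ℕ → Bool) (α β : Addr) : Prop := state f α = state f β

/-- The sequence is not eventually periodic. -/
def Aper (f : ℕ → Bool) : Prop := ∀ i j, i < j → ∃ k, f (i + k) ≠ f (j + k)

variable {f : ℕ → Bool}

lemma state_append_false (α : Addr) : state f (α ++ [false]) = state f α + 1 := by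
  simp [state, step]

lemma state_append_true (α : Addr) :
    state f (α ++ [true]) = if f (state f α) then 1 else 0 := by
  simp only [state, List.foldl_append, List.foldl_cons, List.foldl_nil, step, if_true]
  rfl

lemma state_append_rep (α : Addr) (k : ℕ) :
    state f (α ++ List.replicate k false) = state f α + k := by
  induction k with
  | zero => simp
  | succ k ih =>
    rw [List.replicate_succ', ← List.append_assoc, state_append_false, ih]
    rfl

lemma state_rep (k : ℕ) : state f (List.replicate k false) = k := by
  have := state_append_rep (f := f) [] k
  simpa [state] using this

lemma rel_isTypeSystem (f : ℕ → Bool) : IsTypeSystem (rel f) := by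
  refine ⟨⟨fun _ => rfl, fun h => h.symm, fun h h' => h.trans h'⟩, ?_, ?_⟩
  · intro α β h
    unfold rel at *
    rw [state_append_false, state_append_false, state_append_true, state_append_true, h]
    exact ⟨rfl, rfl⟩
  · intro α β h _
    unfold rel at *
    rw [state_append_false, state_append_false] at h
    omega

/-- From `x_n` one descends to some `x_m` with `f m = 0`, then to `x_0`, then to any `x_k`. -/
lemma rel_dense (hf : Aper f) : Dense (rel f) := by
  intro κ α
  obtain ⟨m, hm⟩ : ∃ m, f (state f κ + m) = false := by
    obtain ⟨k, hk⟩ := hf (state f κ) (state f κ + 1) (by omega)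
    cases h : f (state f κ + k)
    · exact ⟨k, h⟩
    · refine ⟨1 + k, ?_⟩
      rw [h] at hk
      rw [← add_assoc]
      simpa using hk.symm
  refine ⟨List.replicate m false ++ [true] ++ List.replicate (state f α) false, ?_⟩
  unfold rel
  rw [← List.append_assoc, state_append_rep, ← List.append_assoc, state_append_true,
    state_append_rep, hm]
  simp

/-- Identifying `x_i` with `x_j` identifies `x_0` with `x_1` at a later discrepancy of
`f`, and then `x_k` with `x_{k+1}` for all `k`. -/
lemma rel_simple (hf : Aper f) : SimpleTS (rel f) := by
  refine ⟨rel_isTypeSystem f, ⟨[], [false], by simp [rel, state, step]⟩, ?_⟩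
  rintro s ⟨hs, hle⟩
  by_cases hex : ∃ α β, s α β ∧ ¬ rel f α β
  swap
  · push Not at hex
    exact Or.inl fun α β => ⟨hex α β, hle α β⟩
  right
  have h01 : s [] [false] := by
    have main : ∀ α β, s α β → state f α < state f β → s [] [false] := by
      intro α β h hlt
      obtain ⟨k, hk⟩ := hf _ _ hlt
      have h1 := coh_append hs (List.replicate k false ++ [true]) h
      rw [← List.append_assoc, ← List.append_assoc] at h1
      have to0 : ∀ γ : Addr, f (state f γ + k) = false →
          s (γ ++ List.replicate k false ++ [true]) [] := by
        intro γ hγ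
        apply hle
        rw [rel, state_append_true, state_append_rep, hγ]
        rfl
      have to1 : ∀ γ : Addr, f (state f γ + k) = true →
          s (γ ++ List.replicate k false ++ [true]) [false] := by
        intro γ hγ
        apply hle
        rw [rel, state_append_true, state_append_rep, hγ]
        rfl
      cases ha : f (state f α + k) <;> cases hb : f (state f β + k)
      · exact absurd (ha.trans hb.symm) hk
      · exact hs.1.trans (hs.1.symm (to0 α ha)) (hs.1.trans h1 (to1 β hb))
      · exact hs.1.trans (hs.1.symm (to0 β hb)) (hs.1.trans (hs.1.symm h1) (to1 α ha))
      · exact absurd (ha.trans hb.symm) hk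
    obtain ⟨α, β, h, hne⟩ := hex
    rcases lt_or_gt_of_ne hne with hlt | hlt
    · exact main α β h hlt
    · exact main β α (hs.1.symm h) hlt
  have hall : ∀ k, s [] (List.replicate k false) := by
    intro k
    induction k with
    | zero => exact hs.1.refl _
    | succ k ih =>
      have := coh_append hs (List.replicate k false) h01
      exact hs.1.trans ih this
  have key : ∀ α, s [] α := fun α =>
    hs.1.trans (hall (state f α)) (hle _ _ (state_rep _))
  exact fun α β => hs.1.trans (hs.1.symm (key α)) (key β)

lemma rel_nuclear (hf : Aper f) : Nuclear (rel f) := by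
  refine ⟨Set.univ, ⟨⟨[], trivial⟩, fun _ _ _ _ => trivial, fun _ _ => ⟨trivial, trivial⟩, ?_⟩,
    1, one_pos, fun _ _ => trivial⟩
  intro α _ β _
  obtain ⟨x, hx⟩ := rel_dense hf (α ++ [false]) β
  exact ⟨[false] ++ x, by simp, fun _ _ => trivial, by rwa [← List.append_assoc]⟩

lemma rel_injective {f g : ℕ → Bool} (h : ∀ α β, rel f α β → rel g α β) : f = g := by
  funext n
  have h0 := h (List.replicate n false ++ [true]) []
  have h1 := h (List.replicate n false ++ [true]) [false]
  have e0 : ∀ f, state f [] = 0 := fun _ => rfl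
  have e1 : ∀ f, state f [false] = 1 := fun _ => rfl
  simp only [rel, state_append_true, state_rep, e0, e1] at h0 h1
  cases hf : f n <;> cases hg : g n <;> simp_all

/-- Eventually periodic sequences are determined by finitely many values once the preperiod
and the period are known, so there are only countably many. -/
lemma aper_uncountable : ¬ {f : ℕ → Bool | Aper f}.Countable := by
  intro hc
  have hcompl : {f : ℕ → Bool | Aper f}ᶜ.Countable := by
    have hsub : {f : ℕ → Bool | Aper f}ᶜ ⊆
        ⋃ i : ℕ, ⋃ j : ℕ, {f : ℕ → Bool | i < j ∧ ∀ k, f (i + k) = f (j + k)} := by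
      intro f hf
      simp only [Aper, Set.mem_compl_iff, Set.mem_ofPred_eq] at hf
      push Not at hf
      obtain ⟨i, j, hij, h⟩ := hf
      exact Set.mem_iUnion.2 ⟨i, Set.mem_iUnion.2 ⟨j, hij, h⟩⟩
    refine Set.Countable.mono hsub (Set.countable_iUnion fun i => Set.countable_iUnion fun j => ?_)
    refine Set.MapsTo.countable_of_injOn (t := Set.univ)
      (f := fun f : ℕ → Bool => fun t : Fin j => f t) (fun _ _ => trivial) ?_
      (Set.to_countable _)
    rintro f ⟨hij, hf⟩ g ⟨-, hg⟩ hfg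
    funext n
    induction n using Nat.strong_induction_on with
    | _ n ih =>
      by_cases hn : n < j
      · exact congrFun hfg ⟨n, hn⟩
      · obtain ⟨k, rfl⟩ := Nat.exists_eq_add_of_le (not_lt.1 hn)
        rw [← hf k, ← hg k]
        exact ih _ (by omega)
  have huniv := hc.union hcompl
  rw [Set.union_compl_self, Set.countable_univ_iff] at huniv
  obtain ⟨e, he⟩ := exists_surjective_nat (ℕ → Bool)
  obtain ⟨n, hn⟩ := he fun k => !e k k
  have := congrFun hn n
  simp at this

end TypeSystems


/-- **Statement 17.**  There are uncountably many maximal subgroups of Thompson's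
group `V` arising as stabilizers of simple nuclear type systems, none of which
stabilizes setwise a nonempty finite subset of Cantor space. -/
theorem uncountably_many_maximal_subgroups :
    ∃ 𝓜 : Set (Set (Equiv.Perm Cantor)),
      ¬ 𝓜.Countable ∧
      ∀ M ∈ 𝓜,
        (∃ r : Addr → Addr → Prop, SimpleTS r ∧ Nuclear r ∧ M = StabSet r) ∧
        IsMaximalSubgroupOfV M ∧
        ∀ D : Set Cantor, D.Finite → D.Nonempty →
          ¬ ∀ g ∈ M, (fun w => g w) '' D = D := by
  open TypeSystems in
  refine ⟨(fun f => StabSet (rel f)) '' {f | Aper f}, ?_, ?_⟩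
  · intro hc
    refine aper_uncountable (Set.countable_of_injective_of_countable_image ?_ hc)
    intro f hf g hg h
    exact rel_injective fun α β => le_of_stabSet_eq (rel_isTypeSystem f) (rel_isTypeSystem g)
      (rel_dense hf) (rel_dense hg) h
  · rintro _ ⟨f, hf, rfl⟩
    exact ⟨⟨rel f, rel_simple hf, rel_nuclear hf, rfl⟩,
      maximal_of_simple (rel_simple hf) (rel_dense hf),
      no_finite_stable (rel_isTypeSystem f) (rel_dense hf)⟩
end

section
/- Let G be a subgroup of Thompson's group V that acts 2-fold transitively on proper cones. Then G = V. -/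
/-- The addresses `α` and `β` are incomparable: their cones are disjoint. -/
def Incomp (α β : Addr) : Prop := Disjoint (cone α) (cone β)

/-- The pair of addresses `α, β` has small support: their cones do not cover Cantor
space. -/
def SmallPair (α β : Addr) : Prop := cone α ∪ cone β ≠ Set.univ

theorem mem_cone {α : Addr} {x : Cantor} :
    x ∈ cone α ↔ ∀ (i : ℕ) (h : i < α.length), x i = α[i] := by
  constructor
  · rintro ⟨w, rfl⟩ i h
    simp [wcat, h]
  · intro h
    refine ⟨fun n => x (n + α.length), ?_⟩
    funext n
    by_cases hn : n < α.length
    · simp [wcat, hn, h n hn]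
    · simp [wcat, hn, Nat.sub_add_cancel (not_lt.1 hn)]

theorem wcat_mem (α : Addr) (w : Cantor) : wcat α w ∈ cone α := ⟨w, rfl⟩

theorem exists_cons (w : Cantor) : ∃ (c : Bool) (v : Cantor), w = wcat [c] v := by
  have : w ∈ cone [w 0] := mem_cone.2 (by intro i h; simp at h; subst h; simp)
  obtain ⟨v, hv⟩ := this
  exact ⟨_, v, hv.symm⟩

theorem cone_append_subset (α β : Addr) : cone (α ++ β) ⊆ cone α := by
  rintro _ ⟨w, rfl⟩
  rw [wcat_append]
  exact wcat_mem _ _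

theorem mem_cone_append {α : Addr} {x : Cantor} (h : x ∈ cone α) :
    ∃ c, x ∈ cone (α ++ [c]) := by
  obtain ⟨w, rfl⟩ := h
  obtain ⟨c, v, rfl⟩ := exists_cons w
  exact ⟨c, v, wcat_append _ _ _⟩

theorem cone_halves_disjoint (α : Addr) {c d : Bool} (h : c ≠ d) :
    Disjoint (cone (α ++ [c])) (cone (α ++ [d])) := by
  rw [Set.disjoint_left]
  intro x hx hy
  have h1 := mem_cone.1 hx α.length (by simp)
  have h2 := mem_cone.1 hy α.length (by simp)
  simp at h1 h2
  exact h (h1.symm.trans h2)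

theorem not_mem_of_disjoint {s t : Set Cantor} (h : Disjoint s t) {x : Cantor} (hx : x ∈ s) :
    x ∉ t := Set.disjoint_left.1 h hx

theorem ne_of_disjoint {α β : Addr} (h : Disjoint (cone α) (cone β)) : α ≠ β := by
  rintro rfl
  exact not_mem_of_disjoint h (wcat_mem α fun _ => false) (wcat_mem α _)

theorem eq_nil_of_cone {α : Addr} (h : ∀ x, x ∈ cone α) : α = [] := by
  cases α with
  | nil => rfl
  | cons a l =>
    have := mem_cone.1 (h fun _ => !a) 0 (by simp)
    simp at this

/-! ### Transpositions in `G` -/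

/-- `t` sends `αw ↦ βw` and `βw ↦ αφ(w)`, and is the identity off the two cones. -/
def IsTwistedSwap (φ : Cantor → Cantor) (t : Equiv.Perm Cantor) (α β : Addr) : Prop :=
  (∀ w, t (wcat α w) = wcat β w) ∧ (∀ w, t (wcat β w) = wcat α (φ w)) ∧
    ∀ x, x ∉ cone α → x ∉ cone β → t x = x

/-- `t` is the transposition `(α β)` of the cones of `α` and `β`. -/
def IsSwap (t : Equiv.Perm Cantor) (α β : Addr) : Prop :=
  actsOn t α β ∧ actsOn t β α ∧ ∀ x, x ∉ cone α → x ∉ cone β → t x = x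

/-- The twist `φ` can be chosen uniformly for all pairs. -/
theorem exists_twistedSwap {G : Set (Equiv.Perm Cantor)} (hG : IsSubgroupSet G)
    (h2 : ∀ α₁ α₂ β₁ β₂ : Addr, Incomp α₁ α₂ → SmallPair α₁ α₂ →
      Incomp β₁ β₂ → SmallPair β₁ β₂ →
      ∃ g ∈ G, actsOn g α₁ β₁ ∧ actsOn g α₂ β₂) :
    ∃ φ : Cantor → Cantor, ∀ α β : Addr, Incomp α β → SmallPair α β →
      ∃ t ∈ G, IsTwistedSwap φ t α β := by
  have hcov : ∀ x : Cantor, x ∈ cone [false] ∨ x ∈ cone [true, false] ∨ x ∈ cone [true, true] := by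
    intro x
    obtain ⟨c, v, rfl⟩ := exists_cons x
    obtain ⟨d, u, rfl⟩ := exists_cons v
    cases c
    · exact Or.inl (wcat_mem _ _)
    · right
      rw [← wcat_append]
      cases d
      · exact Or.inl (wcat_mem _ _)
      · exact Or.inr (wcat_mem _ _)
  have hd : Disjoint (cone [true, false]) (cone [true, true]) :=
    cone_halves_disjoint [true] (c := false) (d := true) (by simp)
  have hd0 : ∀ c, Disjoint (cone [false]) (cone [true, c]) := fun c =>
    (cone_halves_disjoint [] (c := false) (d := true) (by simp)).mono_right
      (cone_append_subset [true] [c])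
  have hs0 : ∀ c, SmallPair [false] [true, c] := by
    intro c h
    have hm := wcat_mem [true, !c] fun _ => false
    rcases (h ▸ Set.mem_univ _ : wcat [true, !c] (fun _ => false) ∈ cone [false] ∪ cone [true, c])
      with h' | h'
    · exact not_mem_of_disjoint (hd0 _) h' hm
    · exact not_mem_of_disjoint (cone_halves_disjoint [true] (c := c) (d := !c) (by simp)) h' hm
  have hs : SmallPair [true, false] [true, true] := by
    intro h
    have hm := wcat_mem [false] fun _ => false
    rcases (h ▸ Set.mem_univ _ :
      wcat [false] (fun _ => false) ∈ cone [true, false] ∪ cone [true, true]) with h' | h'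
    · exact not_mem_of_disjoint (hd0 _) hm h'
    · exact not_mem_of_disjoint (hd0 _) hm h'
  obtain ⟨g, hgG, hg0, hg1⟩ := h2 [false] [true, false] [false] [true, true]
    (hd0 _) (hs0 _) (hd0 _) (hs0 _)
  have hφ : ∀ w, ∃ v, g (wcat [true, true] w) = wcat [true, false] v := by
    intro w
    rcases hcov (g (wcat [true, true] w)) with ⟨v, hv⟩ | ⟨v, hv⟩ | ⟨v, hv⟩
    · rw [← hg0 v] at hv
      have := g.injective hv
      exact (not_mem_of_disjoint (hd0 true) (wcat_mem [false] v) (this ▸ wcat_mem _ _)).elim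
    · exact ⟨v, hv.symm⟩
    · rw [← hg1 v] at hv
      have := g.injective hv
      exact (not_mem_of_disjoint hd (wcat_mem [true, false] v) (this ▸ wcat_mem _ _)).elim
  choose φ hφ using hφ
  refine ⟨φ, fun α β hαβ hsm => ?_⟩
  obtain ⟨h, hhG, hhα, hhβ⟩ := h2 [true, false] [true, true] α β hd hs hαβ hsm
  refine ⟨h * g * h⁻¹, hG.2.1 _ (hG.2.1 _ hhG _ hgG) _ (hG.2.2 _ hhG), ?_, ?_, ?_⟩
  · intro w
    rw [← hhα w]
    simp [hg1 w, hhβ w]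
  · intro w
    rw [← hhβ w]
    simp [hφ w, hhα (φ w)]
  · intro x hxα hxβ
    obtain ⟨y, rfl⟩ := h.surjective x
    rcases hcov y with ⟨v, rfl⟩ | ⟨v, rfl⟩ | ⟨v, rfl⟩
    · simp [hg0 v]
    · exact (hxα (hhα v ▸ wcat_mem _ _)).elim
    · exact (hxβ (hhβ v ▸ wcat_mem _ _)).elim

theorem exists_coneSwap_s17 {G : Set (Equiv.Perm Cantor)} (hG : IsSubgroupSet G)
    (h2 : ∀ α₁ α₂ β₁ β₂ : Addr, Incomp α₁ α₂ → SmallPair α₁ α₂ →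
      Incomp β₁ β₂ → SmallPair β₁ β₂ →
      ∃ g ∈ G, actsOn g α₁ β₁ ∧ actsOn g α₂ β₂)
    (α β : Addr) (h : Incomp α β) : ∃ s ∈ G, IsSwap s α β := by
  obtain ⟨φ, hφ⟩ := exists_twistedSwap hG h2
  have hdis : ∀ c d, Disjoint (cone (α ++ [c])) (cone (β ++ [d])) := fun c d =>
    h.mono (cone_append_subset _ _) (cone_append_subset _ _)
  have hα : Disjoint (cone (α ++ [false])) (cone (α ++ [true])) :=
    cone_halves_disjoint α (by simp)
  have hβ : Disjoint (cone (β ++ [false])) (cone (β ++ [true])) :=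
    cone_halves_disjoint β (by simp)
  -- `αc` and `βc` never cover: the other half of `α` is missed.
  have hsm : ∀ c, SmallPair (α ++ [c]) (β ++ [c]) := by
    intro c hc
    have hm := wcat_mem (α ++ [!c]) fun _ => false
    rcases (hc ▸ Set.mem_univ _ : wcat (α ++ [!c]) (fun _ => false) ∈
      cone (α ++ [c]) ∪ cone (β ++ [c])) with h' | h'
    · exact not_mem_of_disjoint (cone_halves_disjoint α (c := c) (d := !c) (by simp)) h' hm
    · exact not_mem_of_disjoint (hdis _ _) hm h'
  have hsmα : SmallPair (α ++ [false]) (α ++ [true]) := by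
    intro hc
    have hm := wcat_mem β fun _ => false
    rcases (hc ▸ Set.mem_univ _ : wcat β (fun _ => false) ∈
      cone (α ++ [false]) ∪ cone (α ++ [true])) with h' | h' <;>
    exact not_mem_of_disjoint h (cone_append_subset _ _ h') hm
  obtain ⟨t₀, ht₀, a₀, b₀, c₀⟩ := hφ _ _ (hdis false false) (hsm false)
  obtain ⟨t₁, ht₁, a₁, b₁, c₁⟩ := hφ _ _ (hdis true true) (hsm true)
  obtain ⟨d, hd, da, db, dc⟩ := hφ _ _ hα hsmα
  -- The square of `d` acts as `φ` on both halves of `α`, so its inverse undoes the twist.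
  have key : ∀ c w, (d * d)⁻¹ (wcat (α ++ [c]) (φ w)) = wcat (α ++ [c]) w := by
    intro c w
    rw [Equiv.Perm.inv_eq_iff_eq]
    cases c <;> simp [da, db]
  have hfix : ∀ x, x ∉ cone α → (d * d)⁻¹ x = x := by
    intro x hx
    have := dc x (fun h => hx (cone_append_subset _ _ h)) (fun h => hx (cone_append_subset _ _ h))
    rw [Equiv.Perm.inv_eq_iff_eq]
    simp [this]
  refine ⟨(d * d)⁻¹ * (t₁ * t₀), hG.2.1 _ (hG.2.2 _ (hG.2.1 _ hd _ hd)) _ (hG.2.1 _ ht₁ _ ht₀),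
    ?_, ?_, ?_⟩
  · intro w
    have hP : (t₁ * t₀) (wcat α w) = wcat β w := by
      obtain ⟨c, v, rfl⟩ := exists_cons w
      rw [← wcat_append, ← wcat_append, Equiv.Perm.mul_apply]
      cases c
      · rw [a₀]
        exact c₁ _ (not_mem_of_disjoint (hdis true false).symm (wcat_mem _ _))
          (not_mem_of_disjoint hβ (wcat_mem _ _))
      · rw [c₀ _ (not_mem_of_disjoint hα.symm (wcat_mem _ _))
          (not_mem_of_disjoint (hdis true false) (wcat_mem _ _)), a₁]
    rw [Equiv.Perm.mul_apply, hP]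
    exact hfix _ (not_mem_of_disjoint h.symm (wcat_mem _ _))
  · intro w
    obtain ⟨c, v, rfl⟩ := exists_cons w
    have hP : (t₁ * t₀) (wcat (β ++ [c]) v) = wcat (α ++ [c]) (φ v) := by
      rw [Equiv.Perm.mul_apply]
      cases c
      · rw [b₀]
        exact c₁ _ (not_mem_of_disjoint hα (wcat_mem _ _))
          (not_mem_of_disjoint (hdis false true) (wcat_mem _ _))
      · rw [c₀ _ (not_mem_of_disjoint (hdis false true).symm (wcat_mem _ _))
          (not_mem_of_disjoint hβ.symm (wcat_mem _ _)), b₁]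
    rw [← wcat_append, ← wcat_append, Equiv.Perm.mul_apply, hP, key]
  · intro x hxα hxβ
    have hα' : ∀ c, x ∉ cone (α ++ [c]) := fun c h => hxα (cone_append_subset _ _ h)
    have hβ' : ∀ c, x ∉ cone (β ++ [c]) := fun c h => hxβ (cone_append_subset _ _ h)
    rw [Equiv.Perm.mul_apply, Equiv.Perm.mul_apply, c₀ x (hα' _) (hβ' _), c₁ x (hα' _) (hβ' _),
      hfix x hxα]

/-! ### Transpositions generate `V` -/

/-- The cones of the addresses in `Q` partition Cantor space. -/
def IsConePartition (Q : Finset Addr) : Prop :=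
  (∀ a ∈ Q, ∀ b ∈ Q, a ≠ b → Disjoint (cone a) (cone b)) ∧ ∀ x, ∃ a ∈ Q, x ∈ cone a

/-- A nontrivial cone partition contains both halves of some cone: take `γ` the parent of a
longest address. -/
theorem exists_caret {Q : Finset Addr} (hQ : IsConePartition Q) (hnil : [] ∉ Q) :
    ∃ γ, ∀ c, γ ++ [c] ∈ Q := by
  have hne : Q.Nonempty := by
    obtain ⟨a, ha, -⟩ := hQ.2 fun _ => false
    exact ⟨a, ha⟩
  obtain ⟨m, hm, hmax⟩ := Q.exists_max_image List.length hne
  rcases List.eq_nil_or_concat m with rfl | ⟨γ, c, rfl⟩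
  · exact (hnil hm).elim
  rw [List.concat_eq_append] at *
  suffices h : γ ++ [!c] ∈ Q by
    refine ⟨γ, fun d => ?_⟩
    cases c <;> cases d <;> assumption
  obtain ⟨q, hq, hx⟩ := hQ.2 (wcat (γ ++ [!c]) fun _ => false)
  have hlen : q.length ≤ γ.length + 1 := by simpa using hmax q hq
  have hpre : q <+: γ ++ [!c] := by
    rw [List.prefix_iff_getElem]
    refine ⟨by simpa using hlen, fun i hi => ?_⟩
    rw [← mem_cone.1 hx i hi]
    exact mem_cone.1 (wcat_mem _ _) i (by simp; omega)
  rcases List.prefix_concat_iff.1 (by simpa using hpre) with h | h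
  · simpa [h] using hq
  · exfalso
    obtain ⟨r, rfl⟩ := h
    refine not_mem_of_disjoint (hQ.1 _ hm _ hq ?_) (wcat_mem _ fun _ => false) ?_
    · intro h
      have := congrArg List.length h
      simp at this
    · rw [List.append_assoc]
      exact cone_append_subset _ _ (wcat_mem _ _)

theorem eq_one_of_actsOn_nil {f : Equiv.Perm Cantor} {b : Addr} (h : actsOn f [] b) : f = 1 := by
  have : b = [] := eq_nil_of_cone fun x => by
    obtain ⟨y, rfl⟩ := f.surjective x
    exact ⟨y, by rw [← h y, wcat_nil]⟩
  subst this
  ext1 w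
  simpa [wcat_nil] using h w

theorem actsOn.mul_s17 {g f : Equiv.Perm Cantor} {a b c : Addr} (hg : actsOn g b c)
    (hf : actsOn f a b) : actsOn (g * f) a c := fun w => by
  rw [Equiv.Perm.mul_apply, hf w, hg w]

/-- The transposition of two cones of `Q` permutes the cones of `Q` by prefix substitution. -/
theorem exists_swap_partition {G : Set (Equiv.Perm Cantor)} (hG : IsSubgroupSet G)
    (hS : ∀ α β, Incomp α β → ∃ s ∈ G, IsSwap s α β) {Q : Finset Addr}
    (hQ : IsConePartition Q) {x y : Addr} (hx : x ∈ Q) (hy : y ∈ Q) :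
    ∃ s ∈ G, ∀ z ∈ Q, actsOn s z (Equiv.swap x y z) := by
  by_cases hxy : x = y
  · subst hxy
    exact ⟨1, hG.1, fun z _ w => by simp⟩
  obtain ⟨s, hs, h1, h2, h3⟩ := hS x y (hQ.1 x hx y hy hxy)
  refine ⟨s, hs, fun z hz => ?_⟩
  by_cases hzx : z = x
  · subst hzx
    simpa using h1
  by_cases hzy : z = y
  · subst hzy
    simpa using h2
  rw [Equiv.swap_apply_of_ne_of_ne hzx hzy]
  intro w
  exact h3 _ (not_mem_of_disjoint (hQ.1 z hz x hx hzx) (wcat_mem _ _))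
    (not_mem_of_disjoint (hQ.1 z hz y hy hzy) (wcat_mem _ _))

theorem swap_mem {Q : Finset Addr} {x y z : Addr} (hx : x ∈ Q) (hy : y ∈ Q) (hz : z ∈ Q) :
    Equiv.swap x y z ∈ Q := by
  rw [Equiv.swap_apply_def]
  split_ifs <;> assumption

/-- `G` acts on the cones of `Q` so that any two of them can be carried to any other two. -/
theorem exists_move_two {G : Set (Equiv.Perm Cantor)} (hG : IsSubgroupSet G)
    (hS : ∀ α β, Incomp α β → ∃ s ∈ G, IsSwap s α β) {Q : Finset Addr}
    (hQ : IsConePartition Q) {x y x' y' : Addr} (hx : x ∈ Q) (hy : y ∈ Q) (hx' : x' ∈ Q)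
    (hy' : y' ∈ Q) (hxy : x ≠ y) (hxy' : x' ≠ y') :
    ∃ s ∈ G, (∀ z ∈ Q, ∃ z', actsOn s z z') ∧ actsOn s x x' ∧ actsOn s y y' := by
  obtain ⟨s, hs, hs'⟩ := exists_swap_partition hG hS hQ hx hx'
  have hy1 : Equiv.swap x x' y ∈ Q := swap_mem hx hx' hy
  obtain ⟨t, ht, ht'⟩ := exists_swap_partition hG hS hQ hy1 hy'
  refine ⟨t * s, hG.2.1 _ ht _ hs, fun z hz => ⟨_, (ht' _ (swap_mem hx hx' hz)).mul_s17 (hs' z hz)⟩,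
    ?_, ?_⟩
  · have h := (ht' _ (swap_mem hx hx' hx)).mul_s17 (hs' x hx)
    rwa [Equiv.swap_apply_left, Equiv.swap_apply_of_ne_of_ne ?_ hxy'] at h
    intro h'
    apply hxy
    apply (Equiv.swap x x').injective
    rw [← h', Equiv.swap_apply_left]
  · have h := (ht' _ hy1).mul_s17 (hs' y hy)
    rwa [Equiv.swap_apply_left] at h

/-- Induction on the number of cones of `P`. The image partition need not be part of the data: it
is recovered from the bijectivity of `f`. -/
theorem mem_of_swaps {G : Set (Equiv.Perm Cantor)} (hG : IsSubgroupSet G)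
    (hS : ∀ α β, Incomp α β → ∃ s ∈ G, IsSwap s α β) (n : ℕ) :
    ∀ (f : Equiv.Perm Cantor) (P : Finset Addr), P.card ≤ n → IsConePartition P →
      (∀ a ∈ P, ∃ b, actsOn f a b) → f ∈ G := by
  classical
  induction n with
  | zero =>
    intro f P hn hP _
    obtain ⟨a, ha, -⟩ := hP.2 fun _ => false
    have := Finset.card_pos.2 ⟨a, ha⟩
    omega
  | succ n ih =>
    intro f P hn hP hf
    by_cases hPnil : [] ∈ P
    · obtain ⟨b, hb⟩ := hf _ hPnil
      rw [eq_one_of_actsOn_nil hb]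
      exact hG.1
    have hf' : ∀ a, ∃ b, a ∈ P → actsOn f a b := by
      intro a
      by_cases ha : a ∈ P
      · obtain ⟨b, hb⟩ := hf a ha
        exact ⟨b, fun _ => hb⟩
      · exact ⟨[], fun h => (ha h).elim⟩
    choose b hb using hf'
    have hbdis : ∀ a ∈ P, ∀ a' ∈ P, a ≠ a' → Disjoint (cone (b a)) (cone (b a')) := by
      intro a ha a' ha' haa
      rw [Set.disjoint_left]
      rintro _ ⟨w, rfl⟩ ⟨v, hv⟩
      rw [← hb a ha, ← hb a' ha'] at hv
      exact not_mem_of_disjoint (hP.1 a ha a' ha' haa) (wcat_mem a w)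
        (f.injective hv ▸ wcat_mem a' v)
    have hQ : IsConePartition (P.image b) := by
      constructor
      · intro q hq r hr hqr
        obtain ⟨a, ha, rfl⟩ := Finset.mem_image.1 hq
        obtain ⟨a', ha', rfl⟩ := Finset.mem_image.1 hr
        exact hbdis a ha a' ha' fun h => hqr (by rw [h])
      · intro x
        obtain ⟨y, rfl⟩ := f.surjective x
        obtain ⟨a, ha, w, rfl⟩ := hP.2 y
        exact ⟨b a, Finset.mem_image_of_mem _ ha, w, (hb a ha w).symm⟩
    by_cases hQnil : [] ∈ P.image b
    · obtain ⟨a, ha, hab⟩ := Finset.mem_image.1 hQnil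
      have hinv : actsOn f⁻¹ [] a := by
        intro w
        rw [Equiv.Perm.inv_eq_iff_eq, hb a ha w, hab]
      rw [← inv_inv f, eq_one_of_actsOn_nil hinv, inv_one]
      exact hG.1
    obtain ⟨γ, hγ⟩ := exists_caret hP hPnil
    obtain ⟨δ, hδ⟩ := exists_caret hQ hQnil
    have hγne : γ ++ [false] ≠ γ ++ [true] := by simp
    obtain ⟨s, hs, hsQ, hs0, hs1⟩ := exists_move_two hG hS hQ
      (Finset.mem_image_of_mem b (hγ false)) (Finset.mem_image_of_mem b (hγ true))
      (hδ false) (hδ true) (ne_of_disjoint (hbdis _ (hγ false) _ (hγ true) hγne)) (by simp)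
    -- `s * f` carries the two halves of `γ` to those of `δ`, hence `γ` to `δ`.
    have hsfγ : actsOn (s * f) γ δ := by
      intro w
      obtain ⟨c, v, rfl⟩ := exists_cons w
      rw [← wcat_append, ← wcat_append]
      cases c
      · exact hs0.mul_s17 (hb _ (hγ false)) v
      · exact hs1.mul_s17 (hb _ (hγ true)) v
    have hmem : ∀ a, a ∈ insert γ ((P.erase (γ ++ [false])).erase (γ ++ [true])) ↔
        a = γ ∨ (a ∈ P ∧ ∀ c, a ≠ γ ++ [c]) := by
      intro a
      simp only [Finset.mem_insert, Finset.mem_erase, Bool.forall_bool]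
      tauto
    have hγdis : ∀ a ∈ P, (∀ c, a ≠ γ ++ [c]) → Disjoint (cone γ) (cone a) := by
      intro a ha hne
      rw [Set.disjoint_left]
      intro x hx hxa
      obtain ⟨c, hc⟩ := mem_cone_append hx
      exact not_mem_of_disjoint (hP.1 a ha _ (hγ c) (hne c)) hxa hc
    have hsf : s * f ∈ G := by
      refine ih (s * f) (insert γ ((P.erase (γ ++ [false])).erase (γ ++ [true]))) ?_ ⟨?_, ?_⟩ ?_
      · have h1 := Finset.card_insert_le γ ((P.erase (γ ++ [false])).erase (γ ++ [true]))
        have h2 := Finset.card_erase_add_one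
          (Finset.mem_erase.2 ⟨hγne.symm, hγ true⟩)
        have h3 := Finset.card_erase_add_one (hγ false)
        omega
      · intro a ha a' ha' hne
        rcases (hmem a).1 ha with rfl | ⟨h, h'⟩ <;> rcases (hmem a').1 ha' with rfl | ⟨k, k'⟩
        · exact (hne rfl).elim
        · exact hγdis a' k k'
        · exact (hγdis a h h').symm
        · exact hP.1 a h a' k hne
      · intro x
        obtain ⟨a, ha, hxa⟩ := hP.2 x
        by_cases h : ∀ c, a ≠ γ ++ [c]
        · exact ⟨a, (hmem a).2 (Or.inr ⟨ha, h⟩), hxa⟩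
        · push Not at h
          obtain ⟨c, rfl⟩ := h
          exact ⟨γ, (hmem γ).2 (Or.inl rfl), cone_append_subset _ _ hxa⟩
      · intro a ha
        rcases (hmem a).1 ha with rfl | ⟨h, -⟩
        · exact ⟨δ, hsfγ⟩
        · obtain ⟨z, hz⟩ := hsQ (b a) (Finset.mem_image_of_mem b h)
          exact ⟨z, hz.mul_s17 (hb a h)⟩
    have := hG.2.1 _ (hG.2.2 _ hs) _ hsf
    rwa [inv_mul_cancel_left] at this

/-- **Statement 18.**  A subgroup of Thompson's group `V` acting 2-fold transitively
on proper cones is all of `V`. -/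
theorem eq_V_of_twofold_transitive (G : Set (Equiv.Perm Cantor))
    (hG : IsSubgroupSet G) (hGV : G ⊆ VSet)
    (h2 : ∀ α₁ α₂ β₁ β₂ : Addr, Incomp α₁ α₂ → SmallPair α₁ α₂ →
      Incomp β₁ β₂ → SmallPair β₁ β₂ →
      ∃ g ∈ G, actsOn g α₁ β₁ ∧ actsOn g α₂ β₂) :
    G = VSet := by
  classical
  refine Set.Subset.antisymm hGV ?_
  rintro f ⟨n, A, B, hA, hAc, -, -, hf⟩
  refine mem_of_swaps hG (exists_coneSwap_s17 hG h2) _ f (Finset.univ.image A) le_rfl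
    ⟨?_, ?_⟩ ?_
  · intro a ha b hb hab
    obtain ⟨i, -, rfl⟩ := Finset.mem_image.1 ha
    obtain ⟨j, -, rfl⟩ := Finset.mem_image.1 hb
    exact hA i j fun h => hab (by rw [h])
  · intro x
    have hx : x ∈ ⋃ i, cone (A i) := hAc ▸ Set.mem_univ x
    obtain ⟨i, hi⟩ := Set.mem_iUnion.1 hx
    exact ⟨A i, Finset.mem_image_of_mem _ (Finset.mem_univ i), hi⟩
  · intro a ha
    obtain ⟨i, -, rfl⟩ := Finset.mem_image.1 ha
    exact ⟨B i, hf i⟩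
end
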